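/- arXiv:1603.06712 — 6 statements merged into one kernel-verified Lean document; each statement's English description precedes it below -/
import Mathlib

section
/- Let G' be the network obtained from the infinite rooted binary tree B with root o by replacing, for each r ≥ 0, every edge of B joining a vertex u at distance r from o to a vertex v at distance r+1 from o by a disjoint copy of the gadget D_{2^r}, identifying the unique level-(2^r) vertex of that copy with u and its unique level-(−2^r) vertex with v. Then G' is transient: it admits a flow of net outflow 1 at o and 0 at every other vertex whose energy is finite. -/
/-!
The unit flow splits evenly at every vertex of the binary tree, so the gadget above a word `w`
carries `2 ^ (-|w|)`; inside a gadget it is spread uniformly over all edges between two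
consecutive levels. Kirchhoff's law is then a count of neighbours (`card_up`, `card_down`,
`card_down_tree`): as much flow enters a vertex as leaves it.

For the energy, consider levels of sizes `2 ^ j` and `2 ^ (j - 1)` in a gadget carrying total
flow `f`. They are joined by `2 ^ (2 j - 1)` edges of resistance `2 ^ j`, so these contribute
`2 f² 2 ^ (-j)`. Summing this geometric series over the levels bounds the energy of the gadget
by an absolute multiple of `f² = 4 ^ (-|w|)`, however many levels the gadget has. As there are
`2 ^ r` words of length `r`, the total energy is at most a multiple of `∑ 2 ^ (-r)`.
In the formal proof the energy is first summed over the edges going up from a fixed vertex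
(`hasSum_energy`), and the result is compared with `majorant`, whose sum over the vertices of
a level, the levels of a gadget, and all words is finite (`summable_majorant`).
-/

/-!
STATEMENT 6: The network G', obtained from the infinite rooted binary tree by
replacing each edge at depth r by a copy of the gadget D_{2^r} (identifying the
level-(2^r) vertex with the upper endpoint and the level-(−2^r) vertex with the
lower endpoint), is transient: it admits a flow of net outflow 1 at the root and
0 at every other vertex whose energy is finite.

Encoding: binary-tree vertices are words `w : List Bool` (head = last letter,
parent = tail).  The gadget above a nonempty word `w` is `D n` with
`n = 2 ^ (|w| − 1)`; its levels `−n ≤ i < n` (together with the level-`n` vertex,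
which is the parent's representative) are stored with first coordinate `w`,
the vertex `w` itself being the level `−n` vertex.  The root is `([], 0, 0)`.
-/

namespace Paper

variable {V : Type*}

/-- A flow on a graph: antisymmetric and supported on edges. -/
def IsFlow (G : SimpleGraph V) (θ : V → V → ℝ) : Prop :=
  (∀ u v, θ u v = -θ v u) ∧ ∀ u v, θ u v ≠ 0 → G.Adj u v

/-- The net outflow (divergence) of `θ` at a vertex. -/
noncomputable def divg (θ : V → V → ℝ) (v : V) : ℝ := ∑' w, θ v w

/-- The parameter `n = 2 ^ r` of the gadget `D_{2^r}` replacing the tree edge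
above the (nonempty) word `w`, where `r = |w| − 1` is the depth of its parent. -/
def gadgetN (w : List Bool) : ℕ := 2 ^ (w.length - 1)

/-- The vertices of the network `G'`: the root `([], 0, 0)`, and for each
nonempty word `w` the vertices `(w, i, k)` of the gadget above `w` at levels
`−n ≤ i < n` (where `n = gadgetN w`), with `k < 2 ^ (n − |i|)`.  The vertex
`(w, −n, 0)` is the tree vertex `w` itself; the level-`n` vertex of this gadget
is the representative of the parent `w.tail`. -/
def GPrimeVert : Type :=
  {x : List Bool × ℤ × ℕ //
    (x.1 = [] ∧ x.2.1 = 0 ∧ x.2.2 = 0) ∨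
    (x.1 ≠ [] ∧ -(gadgetN x.1 : ℤ) ≤ x.2.1 ∧ x.2.1 < (gadgetN x.1 : ℤ) ∧
      x.2.2 < 2 ^ (gadgetN x.1 - x.2.1.natAbs))}

/-- Adjacency in `G'`: inside the gadget above `w`, consecutive levels form
complete bipartite graphs; the top level `n − 1` is completely joined to the
representative of the parent `w.tail` (which is the level-`n` vertex). -/
def gPrimeRel (x y : GPrimeVert) : Prop :=
  (x.1.1 ≠ [] ∧ y.1.1 = x.1.1 ∧ y.1.2.1 = x.1.2.1 + 1) ∨
  (x.1.1 ≠ [] ∧ x.1.2.1 = (gadgetN x.1.1 : ℤ) - 1 ∧ y.1.1 = x.1.1.tail ∧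
    y.1.2.2 = 0 ∧
    ((x.1.1.tail = [] ∧ y.1.2.1 = 0) ∨
     (x.1.1.tail ≠ [] ∧ y.1.2.1 = -(gadgetN x.1.1.tail : ℤ))))

/-- The network `G'` as a graph. -/
def gPrimeGraph : SimpleGraph GPrimeVert := SimpleGraph.fromRel gPrimeRel

/-- Edge resistances of `G'`: an edge of the gadget `D n` between levels `i` and
`i + 1` has resistance `2 ^ (n − min (|i|, |i+1|))`; in particular an edge from
level `n − 1` to the level-`n` vertex (the parent, stored with a different first
coordinate) has resistance `2`. -/
noncomputable def gPrimeRes (x y : GPrimeVert) : ℝ :=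
  if y.1.1 = x.1.1 then
    2 ^ (gadgetN x.1.1 - min x.1.2.1.natAbs y.1.2.1.natAbs)
  else 2

/-- The root `o` of `G'`. -/
def gPrimeRoot : GPrimeVert := ⟨([], 0, 0), Or.inl ⟨rfl, rfl, rfl⟩⟩

/-! ### The flow -/

/-- The flow carried by each edge joining `x` to the level above it, in the direction of `x`:
the tree edge above the word `w` carries `2 ^ (-|w|)`, spread uniformly over the complete
bipartite graph between the level of `x` and the next one. -/
noncomputable def edgeFlow (x : GPrimeVert) : ℝ :=
  (1 / 2) ^ x.1.1.length / (2 ^ (gadgetN x.1.1 - x.1.2.1.natAbs) *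
    2 ^ (gadgetN x.1.1 - (x.1.2.1 + 1).natAbs))

open scoped Classical in
/-- The value of `edgeFlow x` on the pairs `(x, y)` with `y` one level above `x`,
and `0` on all other pairs. -/
noncomputable def upFlow (x y : GPrimeVert) : ℝ := if gPrimeRel x y then edgeFlow x else 0

/-- The vertex of `G'` representing the vertex `w` of the binary tree. -/
def treeVert (w : List Bool) : GPrimeVert :=
  ⟨(w, if w = [] then 0 else -(gadgetN w : ℤ), 0), by
    by_cases h : w = []
    · simp [h]
    · refine Or.inr ⟨h, ?_⟩
      have : 0 < gadgetN w := by unfold gadgetN; positivity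
      simp only [h, if_false]
      refine ⟨le_rfl, by omega, by positivity⟩⟩

/-! ### Neighbours of a vertex -/

lemma gadgetN_pos (w : List Bool) : 0 < gadgetN w := by unfold gadgetN; positivity

lemma vert_ext {x y : GPrimeVert} (h1 : x.1.1 = y.1.1) (h2 : x.1.2.1 = y.1.2.1)
    (h3 : x.1.2.2 = y.1.2.2) : x = y :=
  Subtype.ext (Prod.ext h1 (Prod.ext h2 h3))

lemma vert_bounds (x : GPrimeVert) (h : x.1.1 ≠ []) :
    -(gadgetN x.1.1 : ℤ) ≤ x.1.2.1 ∧ x.1.2.1 < (gadgetN x.1.1 : ℤ) ∧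
      x.1.2.2 < 2 ^ (gadgetN x.1.1 - x.1.2.1.natAbs) := by
  rcases x.2 with h' | h'
  · exact absurd h'.1 h
  · exact h'.2

lemma eq_root (x : GPrimeVert) (h : x.1.1 = []) : x = gPrimeRoot := by
  rcases x.2 with h' | h'
  · exact vert_ext h'.1 h'.2.1 h'.2.2
  · exact absurd h h'.1

lemma treeVert_nil : treeVert [] = gPrimeRoot := eq_root _ rfl

lemma eq_treeVert (x : GPrimeVert) (h : x.1.1 ≠ []) (hi : x.1.2.1 = -(gadgetN x.1.1 : ℤ)) :
    x = treeVert x.1.1 := by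
  have hb := (vert_bounds x h).2.2
  have : gadgetN x.1.1 - x.1.2.1.natAbs = 0 := by omega
  rw [this] at hb
  refine vert_ext rfl ?_ ?_
  · simp [treeVert, h, hi]
  · simp only [treeVert]; omega

/-- At the top level of a gadget the only upward neighbour is the parent. -/
lemma rel_top {x y : GPrimeVert} (h : x.1.1 ≠ [])
    (hi : x.1.2.1 = (gadgetN x.1.1 : ℤ) - 1) :
    gPrimeRel x y ↔ y = treeVert x.1.1.tail := by
  constructor
  · rintro (⟨_, h1, h2⟩ | ⟨_, _, h1, h2, h3⟩)
    · have := (vert_bounds y (h1 ▸ h)).2.1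
      rw [h1] at this
      omega
    · refine vert_ext h1 ?_ h2
      rcases h3 with ⟨h3, h4⟩ | ⟨h3, h4⟩
      · simp [treeVert, h3, h4]
      · simp only [treeVert, h3, h4, if_false]
  · rintro rfl
    refine Or.inr ⟨h, hi, rfl, rfl, ?_⟩
    by_cases h3 : x.1.1.tail = []
    · exact Or.inl ⟨h3, by simp [treeVert, h3]⟩
    · exact Or.inr ⟨h3, by simp only [treeVert, h3, if_false]⟩

/-- A vertex below the top of the gadget has all of the next level as upward neighbours. -/
lemma rel_inner {x y : GPrimeVert} (h : x.1.1 ≠ [])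
    (hi : x.1.2.1 ≠ (gadgetN x.1.1 : ℤ) - 1) :
    gPrimeRel x y ↔ y.1.1 = x.1.1 ∧ y.1.2.1 = x.1.2.1 + 1 := by
  constructor
  · rintro (⟨_, h1, h2⟩ | ⟨_, h1, _⟩)
    · exact ⟨h1, h2⟩
    · exact absurd h1 hi
  · rintro ⟨h1, h2⟩
    exact Or.inl ⟨h, h1, h2⟩

/-- The set of vertices on an inner or bottom level of a gadget has the expected size. -/
lemma card_level (w : List Bool) (i : ℤ) (hw : w ≠ []) (h1 : -(gadgetN w : ℤ) ≤ i)
    (h2 : i < (gadgetN w : ℤ)) :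
    Nat.card {y : GPrimeVert // y.1.1 = w ∧ y.1.2.1 = i} = 2 ^ (gadgetN w - i.natAbs) := by
  let e : Fin (2 ^ (gadgetN w - i.natAbs)) → {y : GPrimeVert // y.1.1 = w ∧ y.1.2.1 = i} :=
    fun k => ⟨⟨(w, i, k), Or.inr ⟨hw, h1, h2, k.2⟩⟩, rfl, rfl⟩
  have he : Function.Bijective e := by
    constructor
    · intro a b hab
      have := congrArg (fun z => z.1.1.2.2) hab
      exact Fin.ext this
    · rintro ⟨y, hy1, hy2⟩
      have hb := (vert_bounds y (hy1 ▸ hw)).2.2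
      rw [hy1, hy2] at hb
      exact ⟨⟨y.1.2.2, hb⟩, Subtype.ext (vert_ext hy1.symm hy2.symm rfl)⟩
  rw [← Nat.card_eq_of_bijective e he, Nat.card_fin]

lemma card_up (x : GPrimeVert) (h : x.1.1 ≠ []) :
    Nat.card {y // gPrimeRel x y} = 2 ^ (gadgetN x.1.1 - (x.1.2.1 + 1).natAbs) := by
  have hb := vert_bounds x h
  by_cases hi : x.1.2.1 = (gadgetN x.1.1 : ℤ) - 1
  · have h0 : gadgetN x.1.1 - (x.1.2.1 + 1).natAbs = 0 := by omega
    rw [h0, Nat.card_congr (Equiv.subtypeEquivRight fun y => rel_top h hi)]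
    simp
  · rw [Nat.card_congr (Equiv.subtypeEquivRight fun y => rel_inner h hi)]
    exact card_level _ _ h (by omega) (by omega)

lemma rel_down {x y : GPrimeVert} (h : x.1.1 ≠ []) (hi : x.1.2.1 ≠ -(gadgetN x.1.1 : ℤ)) :
    gPrimeRel y x ↔ y.1.1 = x.1.1 ∧ y.1.2.1 = x.1.2.1 - 1 := by
  constructor
  · rintro (⟨_, h1, h2⟩ | ⟨_, _, h1, _, h3⟩)
    · exact ⟨h1.symm, by omega⟩
    · rcases h3 with ⟨h3, _⟩ | ⟨_, h4⟩
      · exact absurd (h1.trans h3) h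
      · rw [← h1] at h4
        exact absurd h4 hi
  · rintro ⟨h1, h2⟩
    exact Or.inl ⟨h1 ▸ h, h1.symm, by omega⟩

lemma card_down (x : GPrimeVert) (h : x.1.1 ≠ []) (hi : x.1.2.1 ≠ -(gadgetN x.1.1 : ℤ)) :
    Nat.card {y // gPrimeRel y x} = 2 ^ (gadgetN x.1.1 - (x.1.2.1 - 1).natAbs) := by
  have hb := vert_bounds x h
  rw [Nat.card_congr (Equiv.subtypeEquivRight fun y => rel_down h hi)]
  exact card_level _ _ h (by omega) (by omega)

lemma rel_down_tree {w : List Bool} {y : GPrimeVert} :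
    gPrimeRel y (treeVert w) ↔
      (∃ b, y.1.1 = b :: w) ∧ y.1.2.1 = (gadgetN y.1.1 : ℤ) - 1 := by
  constructor
  · rintro (⟨h0, h1, h2⟩ | ⟨h0, h1, h2, _⟩)
    · have hb := vert_bounds y h0
      change w = _ at h1
      subst h1
      simp only [treeVert, h0, if_false] at h2
      omega
    · refine ⟨?_, h1⟩
      change w = _ at h2
      exact ⟨y.1.1.head h0, by rw [h2, List.cons_head_tail]⟩
  · rintro ⟨⟨b, hb⟩, hi⟩
    rw [rel_top (by simp [hb]) hi, hb, List.tail_cons]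

/-- A tree vertex has four downward neighbours: two in each of the gadgets below it. -/
lemma card_down_tree (w : List Bool) : Nat.card {y // gPrimeRel y (treeVert w)} = 4 := by
  rw [Nat.card_congr (Equiv.subtypeEquivRight fun y => rel_down_tree)]
  have hs (b : Bool) : gadgetN (b :: w) - ((gadgetN (b :: w) : ℤ) - 1).natAbs = 1 := by
    have := gadgetN_pos (b :: w)
    omega
  let e : Bool × Fin 2 → {y : GPrimeVert //
      (∃ b, y.1.1 = b :: w) ∧ y.1.2.1 = (gadgetN y.1.1 : ℤ) - 1} :=
    fun p => ⟨⟨(p.1 :: w, (gadgetN (p.1 :: w) : ℤ) - 1, p.2),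
      Or.inr ⟨by simp, by
        have := gadgetN_pos (p.1 :: w); simp only; omega, by simp only; omega, by
        simp only [hs, pow_one]; exact p.2.2⟩⟩, ⟨p.1, rfl⟩, rfl⟩
  have he : Function.Bijective e := by
    constructor
    · rintro ⟨a, k⟩ ⟨b, l⟩ hab
      have h1 := congrArg (fun z => z.1.1.2.2) hab
      have h2 := congrArg (fun z => z.1.1.1) hab
      simp only [e, List.cons.injEq, and_true] at h1 h2
      exact Prod.ext h2 (Fin.ext h1)
    · rintro ⟨y, ⟨b, hb⟩, hi⟩
      have hk := (vert_bounds y (by simp [hb])).2.2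
      rw [hi, hb, hs b] at hk
      refine ⟨(b, ⟨y.1.2.2, hk⟩), Subtype.ext (vert_ext hb.symm ?_ rfl)⟩
      change (gadgetN (b :: w) : ℤ) - 1 = y.1.2.1
      rw [hi, hb]
  rw [← Nat.card_eq_of_bijective e he]
  simp

/-! ### Kirchhoff's law -/

/-- The positive cardinality `m` also encodes that the set where `P` holds is finite. -/
lemma hasSum_const_on {α : Type*} (P : α → Prop) (f : α → ℝ) (c : ℝ) (m : ℕ) (hm : m ≠ 0)
    (hP : Nat.card {y // P y} = m) (hf : ∀ y, P y → f y = c) (hf0 : ∀ y, ¬ P y → f y = 0) :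
    HasSum f (m * c) := by
  have hfin : Finite {y // P y} := Nat.finite_of_card_ne_zero (hP ▸ hm)
  have := Fintype.ofFinite {y // P y}
  have h := hasSum_fintype (fun y : {y // P y} => f y)
  have h2 : ∑ y : {y // P y}, f y = m * c := by
    rw [Finset.sum_congr rfl fun y _ => hf y.1 y.2]
    simp [← hP, Nat.card_eq_fintype_card]
  rw [h2] at h
  refine (hasSum_subtype_iff_of_support_subset (s := {y | P y}) ?_).1 h
  intro y hy
  by_contra hn
  exact hy (hf0 y hn)

lemma hasSum_up (x : GPrimeVert) (h : x.1.1 ≠ []) :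
    HasSum (fun y => upFlow x y)
      ((1 / 2) ^ x.1.1.length / 2 ^ (gadgetN x.1.1 - x.1.2.1.natAbs)) := by
  convert hasSum_const_on (gPrimeRel x) (fun y => upFlow x y) (edgeFlow x) _ (by positivity)
    (card_up x h) (fun y hy => by simp [upFlow, hy]) (fun y hy => by simp [upFlow, hy]) using 1
  unfold edgeFlow
  push_cast
  field_simp

lemma hasSum_down (x : GPrimeVert) (h : x.1.1 ≠ []) (hi : x.1.2.1 ≠ -(gadgetN x.1.1 : ℤ)) :
    HasSum (fun y => upFlow y x)
      ((1 / 2) ^ x.1.1.length / 2 ^ (gadgetN x.1.1 - x.1.2.1.natAbs)) := by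
  convert hasSum_const_on (fun y => gPrimeRel y x) (fun y => upFlow y x)
    ((1 / 2) ^ x.1.1.length / (2 ^ (gadgetN x.1.1 - (x.1.2.1 - 1).natAbs) *
    2 ^ (gadgetN x.1.1 - x.1.2.1.natAbs))) _ (by positivity)
    (card_down x h hi) (fun y hy => ?_) (fun y hy => by simp [upFlow, hy]) using 1
  · push_cast
    field_simp
  · obtain ⟨h1, h2⟩ := (rel_down h hi).1 hy
    simp only [upFlow, hy, if_true, edgeFlow, h1, h2, sub_add_cancel]

lemma hasSum_down_tree (w : List Bool) :
    HasSum (fun y => upFlow y (treeVert w)) ((1 / 2) ^ w.length) := by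
  convert hasSum_const_on (fun y => gPrimeRel y (treeVert w)) (fun y => upFlow y (treeVert w))
    ((1 / 2) ^ (w.length + 1) / 2) _ (by norm_num)
    (card_down_tree w) (fun y hy => ?_) (fun y hy => by simp [upFlow, hy]) using 1
  · push_cast
    ring
  · obtain ⟨⟨b, h1⟩, h2⟩ := rel_down_tree.1 hy
    have := gadgetN_pos y.1.1
    have e1 : gadgetN y.1.1 - y.1.2.1.natAbs = 1 := by omega
    have e2 : gadgetN y.1.1 - (y.1.2.1 + 1).natAbs = 0 := by omega
    simp only [upFlow, hy, if_true, edgeFlow, e1, e2]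
    simp [h1]

/-! ### Energy at a vertex -/

/-- The resistance of the edges joining `x` to the next level, also when the upper endpoint
is a tree vertex stored in a different gadget. -/
lemma res_of_rel {x y : GPrimeVert} (h : gPrimeRel x y) :
    gPrimeRes x y = 2 ^ (gadgetN x.1.1 - min x.1.2.1.natAbs (x.1.2.1 + 1).natAbs) := by
  unfold gPrimeRes
  rcases h with ⟨_, h1, h2⟩ | ⟨h0, h1, h2, _⟩
  · rw [if_pos h1, h2]
  · have hne : y.1.1 ≠ x.1.1 := by
      intro h3
      have := congrArg List.length (h3.symm.trans h2)
      have h4 := List.length_pos_iff.2 h0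
      rw [List.length_tail] at this
      omega
    have := gadgetN_pos x.1.1
    have e : gadgetN x.1.1 - min x.1.2.1.natAbs (x.1.2.1 + 1).natAbs = 1 := by omega
    rw [if_neg hne, e, pow_one]

lemma res_symm (x y : GPrimeVert) : gPrimeRes x y = gPrimeRes y x := by
  unfold gPrimeRes
  by_cases h : y.1.1 = x.1.1
  · rw [if_pos h, if_pos h.symm, h, min_comm]
  · rw [if_neg h, if_neg (fun h' => h h'.symm)]

lemma res_nonneg (x y : GPrimeVert) : 0 ≤ gPrimeRes x y := by
  unfold gPrimeRes
  split_ifs <;> positivity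

/-- The energy of the edges joining `x` to the next level. -/
lemma hasSum_energy (x : GPrimeVert) (h : x.1.1 ≠ []) :
    HasSum (fun y => gPrimeRes x y * upFlow x y ^ 2)
      (((2 ^ (gadgetN x.1.1 - (x.1.2.1 + 1).natAbs) : ℕ) : ℝ) *
        (2 ^ (gadgetN x.1.1 - min x.1.2.1.natAbs (x.1.2.1 + 1).natAbs) * edgeFlow x ^ 2)) :=
  hasSum_const_on (gPrimeRel x) _ _ _ (by positivity) (card_up x h)
    (fun y hy => by simp only [res_of_rel hy, upFlow, hy, if_true])
    (fun y hy => by simp [upFlow, hy])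

/-- With `2 ^ a`, `2 ^ b` the sizes of the level of a vertex and of the next level, `2 ^ c` the
larger of the two, which is also the resistance of the edges between them, and `f` the flow
through the gadget, the energy of the edges going up from the vertex is at most twice the
squared flow over the squared size of its level. -/
lemma energy_bound (f : ℝ) (a b c : ℕ) (hc : a + b + 1 = 2 * c) (hac : a ≤ c) :
    (2 : ℝ) ^ b * (2 ^ c * (f / (2 ^ a * 2 ^ b)) ^ 2) ≤ 2 * f ^ 2 * (1 / 4) ^ a := by
  have h1 : (2 : ℝ) ^ b * 2 ^ a * 2 = 2 ^ c * 2 ^ c := by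
    rw [← pow_add, ← pow_add, ← pow_succ]
    congr 1
    omega
  have h2 : (2 : ℝ) ^ a ≤ 2 ^ c := pow_le_pow_right₀ (by norm_num) hac
  have h4 : (4 : ℝ) ^ a = 2 ^ a * 2 ^ a := by rw [← mul_pow]; norm_num
  have hA : (0 : ℝ) < 2 ^ a := by positivity
  have hB : (0 : ℝ) < 2 ^ b := by positivity
  have hC : (0 : ℝ) < 2 ^ c := by positivity
  rw [one_div_pow, h4]
  have e : (2 : ℝ) ^ b * (2 ^ c * (f / (2 ^ a * 2 ^ b)) ^ 2)
      = f ^ 2 / (2 ^ a * 2 ^ a) * (2 ^ c / 2 ^ b) := by field_simp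
  have e2 : (2 : ℝ) * f ^ 2 * (1 / (2 ^ a * 2 ^ a)) = f ^ 2 / (2 ^ a * 2 ^ a) * 2 := by ring
  rw [e, e2]
  refine mul_le_mul_of_nonneg_left ?_ (by positivity)
  rw [div_le_iff₀ hB]
  nlinarith

/-! ### Summation over all vertices -/

/-- A majorant of the energy at the vertex `(w, i, k)`, extended by zero to all triples. -/
noncomputable def majorant (p : List Bool × ℤ × ℕ) : ℝ :=
  if p.2.1.natAbs ≤ gadgetN p.1 ∧ p.2.2 < 2 ^ (gadgetN p.1 - p.2.1.natAbs) then
    2 * ((1 / 2) ^ p.1.length) ^ 2 * (1 / 4) ^ (gadgetN p.1 - p.2.1.natAbs) else 0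

lemma majorant_nonneg (p) : 0 ≤ majorant p := by
  unfold majorant
  split_ifs <;> positivity

lemma summable_words : Summable (fun w : List Bool => ((1 / 2 : ℝ) ^ w.length) ^ 2) := by
  rw [← (Equiv.sigmaFiberEquiv (List.length (α := Bool))).summable_iff]
  have hS (n : ℕ) : HasSum (fun c : {w : List Bool // w.length = n} =>
      ((1 / 2 : ℝ) ^ c.1.length) ^ 2) ((1 / 2) ^ n) := by
    have hc : Nat.card {w : List Bool // w.length = n} = 2 ^ n := by
      have := card_vector (α := Bool) n
      rw [Fintype.card_bool, ← Nat.card_eq_fintype_card] at this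
      exact this
    convert hasSum_const_on (fun _ => True) (fun c : {w : List Bool // w.length = n} =>
      ((1 / 2 : ℝ) ^ c.1.length) ^ 2) (((1 / 2) ^ n) ^ 2) (2 ^ n) (by positivity)
      (by rw [← hc]; exact Nat.card_congr (Equiv.subtypeUnivEquiv fun _ => trivial))
      (fun y _ => by rw [y.2]) (fun y hy => absurd trivial hy) using 1
    push_cast
    rw [sq, ← mul_assoc, ← mul_pow]
    norm_num
  refine (summable_sigma_of_nonneg fun _ => by simp only [Function.comp]; positivity).2 ⟨?_, ?_⟩
  · exact fun n => (hS n).summable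
  · have : Summable (fun n : ℕ => (1 / 2 : ℝ) ^ n) := summable_geometric_two
    exact this.congr fun n => ((hS n).tsum_eq).symm

lemma hasSum_majorant_level (w : List Bool) (i : ℤ) :
    HasSum (fun k => majorant (w, i, k))
      (if i.natAbs ≤ gadgetN w then
        2 * ((1 / 2) ^ w.length) ^ 2 * (1 / 2) ^ (gadgetN w - i.natAbs) else 0) := by
  by_cases hi : i.natAbs ≤ gadgetN w
  · have hc : Nat.card {k : ℕ // k < 2 ^ (gadgetN w - i.natAbs)} =
        2 ^ (gadgetN w - i.natAbs) := by
      rw [Nat.card_congr Fin.equivSubtype.symm, Nat.card_fin]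
    convert hasSum_const_on _ (fun k => majorant (w, i, k))
      (2 * ((1 / 2) ^ w.length) ^ 2 * (1 / 4) ^ (gadgetN w - i.natAbs)) _ (by positivity) hc
      (fun k hk => by simp only [majorant, hi, hk, and_self, if_true])
      (fun k hk => by simp only [majorant, hk, and_false, if_false]) using 1
    rw [if_pos hi]
    push_cast
    have : (1 / 2 : ℝ) ^ (gadgetN w - i.natAbs) =
        2 ^ (gadgetN w - i.natAbs) * (1 / 4) ^ (gadgetN w - i.natAbs) := by
      rw [← mul_pow]; norm_num
    rw [this]
    ring
  · simp [majorant, hi, hasSum_zero]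

lemma sum_levels (n : ℕ) :
    ∑ i ∈ Finset.Icc (-(n : ℤ)) n, (1 / 2 : ℝ) ^ (n - i.natAbs) ≤ 4 := by
  induction n with
  | zero => simp
  | succ n ih =>
    have hI : Finset.Icc (-((n + 1 : ℕ) : ℤ)) ((n + 1 : ℕ) : ℤ) =
        insert (-((n + 1 : ℕ) : ℤ)) (insert ((n + 1 : ℕ) : ℤ) (Finset.Icc (-(n : ℤ)) n)) := by
      ext i
      simp only [Finset.mem_Icc, Finset.mem_insert]
      omega
    rw [hI, Finset.sum_insert (by simp only [Finset.mem_Icc, Finset.mem_insert]; omega),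
      Finset.sum_insert (by simp only [Finset.mem_Icc]; omega)]
    have : ∑ i ∈ Finset.Icc (-(n : ℤ)) n, (1 / 2 : ℝ) ^ (n + 1 - i.natAbs) =
        (1 / 2) * ∑ i ∈ Finset.Icc (-(n : ℤ)) n, (1 / 2 : ℝ) ^ (n - i.natAbs) := by
      rw [Finset.mul_sum]
      refine Finset.sum_congr rfl fun i hi => ?_
      rw [Finset.mem_Icc] at hi
      rw [← pow_succ']
      congr 1
      omega
    rw [this, Int.natAbs_neg, Int.natAbs_natCast, Nat.sub_self, pow_zero]
    linarith

lemma summable_majorant : Summable majorant := by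
  -- The sum over one gadget is finite and at most `8` times its squared flow.
  have hG (w : List Bool) : HasSum (fun i : ℤ => ∑' k, majorant (w, i, k))
      (∑ i ∈ Finset.Icc (-(gadgetN w : ℤ)) (gadgetN w),
        2 * ((1 / 2) ^ w.length) ^ 2 * (1 / 2 : ℝ) ^ (gadgetN w - i.natAbs)) := by
    simp only [(hasSum_majorant_level w _).tsum_eq]
    have := hasSum_sum_of_ne_finset_zero (L := .unconditional ℤ) (f := fun i : ℤ => if i.natAbs ≤ gadgetN w then
        2 * ((1 / 2 : ℝ) ^ w.length) ^ 2 * (1 / 2) ^ (gadgetN w - i.natAbs) else 0)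
        (s := Finset.Icc (-(gadgetN w : ℤ)) (gadgetN w)) (fun i hi => by
          rw [Finset.mem_Icc] at hi
          exact if_neg (by omega))
    convert this using 1
    refine Finset.sum_congr rfl fun i hi => ?_
    rw [Finset.mem_Icc] at hi
    rw [if_pos (by omega)]
  have hW (w : List Bool) : Summable (fun q : ℤ × ℕ => majorant (w, q)) :=
    (summable_prod_of_nonneg fun q => majorant_nonneg _).2
      ⟨fun i => (hasSum_majorant_level w i).summable, (hG w).summable⟩
  refine (summable_prod_of_nonneg fun p => majorant_nonneg p).2 ⟨hW, ?_⟩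
  refine Summable.of_nonneg_of_le (fun w => tsum_nonneg fun q => majorant_nonneg _) (fun w => ?_)
    (summable_words.mul_left 8)
  rw [(hW w).tsum_prod, (hG w).tsum_eq, ← Finset.mul_sum]
  have := mul_le_mul_of_nonneg_left (sum_levels (gadgetN w))
    (show (0 : ℝ) ≤ 2 * ((1 / 2) ^ w.length) ^ 2 by positivity)
  linarith

lemma upFlow_root (x y : GPrimeVert) (h : x.1.1 = []) : upFlow x y = 0 := by
  have : ¬ gPrimeRel x y := by
    rintro (⟨h0, _⟩ | ⟨h0, _⟩) <;> exact h0 h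
  simp [upFlow, this]

lemma summable_energy :
    Summable (fun p : GPrimeVert × GPrimeVert => gPrimeRes p.1 p.2 * upFlow p.1 p.2 ^ 2) := by
  refine (summable_prod_of_nonneg fun p => mul_nonneg (res_nonneg _ _) (sq_nonneg _)).2
    ⟨fun x => ?_, ?_⟩
  · by_cases h : x.1.1 = []
    · simp [upFlow_root x _ h]
    · exact (hasSum_energy x h).summable
  · refine Summable.of_nonneg_of_le
      (fun x => tsum_nonneg fun y => mul_nonneg (res_nonneg _ _) (sq_nonneg _)) (fun x => ?_)
      (summable_majorant.comp_injective Subtype.val_injective)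
    by_cases h : x.1.1 = []
    · simp only [upFlow_root x _ h, ne_eq, OfNat.ofNat_ne_zero, not_false_eq_true, zero_pow,
        mul_zero, tsum_zero]
      exact majorant_nonneg x.1
    · obtain ⟨h1, h2, h3⟩ := vert_bounds x h
      simp only [(hasSum_energy x h).tsum_eq, Function.comp, edgeFlow, majorant]
      rw [if_pos ⟨by omega, h3⟩]
      push_cast
      exact energy_bound _ _ _ _ (by omega) (by omega)

theorem gPrime_transient :
    ∃ θ : GPrimeVert → GPrimeVert → ℝ,
      IsFlow gPrimeGraph θ ∧
      divg θ gPrimeRoot = 1 ∧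
      (∀ v, v ≠ gPrimeRoot → divg θ v = 0) ∧
      Summable (fun p : GPrimeVert × GPrimeVert =>
        gPrimeRes p.1 p.2 * θ p.1 p.2 ^ 2) := by
  refine ⟨fun x y => upFlow y x - upFlow x y, ⟨fun u v => by ring, fun u v h => ?_⟩, ?_, ?_, ?_⟩
  · rw [gPrimeGraph, SimpleGraph.fromRel_adj]
    refine ⟨?_, ?_⟩
    · rintro rfl
      exact h (sub_self _)
    · by_contra hn
      rw [not_or] at hn
      exact h (by simp [upFlow, hn.1, hn.2])
  · have h := hasSum_down_tree []
    rw [treeVert_nil] at h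
    simp only [divg, upFlow_root gPrimeRoot _ rfl, sub_zero]
    simpa using h.tsum_eq
  · intro v hv
    have hw : v.1.1 ≠ [] := fun h => hv (eq_root v h)
    have hd : HasSum (fun y => upFlow y v)
        ((1 / 2) ^ v.1.1.length / 2 ^ (gadgetN v.1.1 - v.1.2.1.natAbs)) := by
      by_cases hi : v.1.2.1 = -(gadgetN v.1.1 : ℤ)
      · have h := hasSum_down_tree v.1.1
        rw [← eq_treeVert v hw hi] at h
        have h0 : gadgetN v.1.1 - v.1.2.1.natAbs = 0 := by omega
        simpa [h0] using h
      · exact hasSum_down v hw hi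
    have := (hd.sub (hasSum_up v hw)).tsum_eq
    rwa [sub_self] at this
  · have h1 := summable_energy
    have h2 : Summable (fun p : GPrimeVert × GPrimeVert =>
        gPrimeRes p.1 p.2 * upFlow p.2 p.1 ^ 2) := by
      refine (h1.comp_injective Prod.swap_injective).congr fun p => ?_
      simp only [Function.comp, Prod.fst_swap, Prod.snd_swap]
      rw [res_symm]
    refine Summable.of_nonneg_of_le (fun p => mul_nonneg (res_nonneg _ _) (sq_nonneg _))
      (fun p => ?_) ((h1.add h2).mul_left 2)
    have := mul_nonneg (res_nonneg p.1 p.2) (sq_nonneg (upFlow p.2 p.1 + upFlow p.1 p.2))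
    nlinarith

end Paper
end

section
/- For every n ≥ 1, the effective resistance in the gadget D_n between its unique vertex at level n and its unique vertex at level −n is at most 4 (in particular it is bounded above by a constant independent of n). -/
/-!
The witness is the flow that splits the unit current evenly over the edges between each pair of
consecutive levels: an edge from level `j + 1` down to level `j` carries `1 / (c (j + 1) * c j)`,
where `c i = 2 ^ (n - |i|)` is the size of level `i`. Summing over a level cancels one factor `c`,
so every inner vertex receives as much as it sends (`divg_levelFlow`).

This flow satisfies Ohm's law for the potential `Φ i = sign i * (2 ^ (|i| + 1) - 2) / 2 ^ n`
(`res_mul_levelFlow`). Hence its energy is the potential difference between the two end vertices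
(`energy_eq`), namely `Φ n - Φ (-n) = 4 - 4 / 2 ^ n ≤ 4`.
-/

/-!
STATEMENT 7: For every n ≥ 1, the effective resistance in the gadget D_n between
its unique vertex at level n and its unique vertex at level −n is at most 4.
-/

namespace Paper

variable {V : Type*}

/-- The effective resistance between `x` and `y` in the network `(G, r)`:
the infimum of the energies `(1/2)·Σ_{u,v} r(u,v)·θ(u,v)²` over all unit flows
`θ` from `x` to `y`. -/
noncomputable def effRes (G : SimpleGraph V) (r : V → V → ℝ) (x y : V) : ℝ :=
  sInf {E : ℝ | ∃ θ : V → V → ℝ, IsFlow G θ ∧ divg θ x = 1 ∧ divg θ y = -1 ∧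
    (∀ v, v ≠ x → v ≠ y → divg θ v = 0) ∧
    Summable (fun p : V × V => r p.1 p.2 * θ p.1 p.2 ^ 2) ∧
    E = (1 / 2) * ∑' p : V × V, r p.1 p.2 * θ p.1 p.2 ^ 2}

/-- The vertices of the gadget `D n`: pairs `(i, k)` with `|i| ≤ n` and
`k < 2 ^ (n − |i|)`. -/
def GadgetVert (n : ℕ) : Type :=
  {p : ℤ × ℕ // p.1.natAbs ≤ n ∧ p.2 < 2 ^ (n - p.1.natAbs)}

/-- The gadget `D n` as a graph: levels `i` and `i + 1` form a complete
bipartite graph, and there are no other edges. -/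
def gadgetGraph (n : ℕ) : SimpleGraph (GadgetVert n) :=
  SimpleGraph.fromRel (fun x y => y.1.1 = x.1.1 + 1)

/-- The resistance of an edge of `D n` between levels `i` and `i + 1` is
`2 ^ (n − min (|i|, |i+1|))`. -/
noncomputable def gadgetRes (n : ℕ) (x y : GadgetVert n) : ℝ :=
  2 ^ (n - min x.1.1.natAbs y.1.1.natAbs)

/-- The unique vertex of `D n` at level `n`. -/
def gadgetTop (n : ℕ) : GadgetVert n :=
  ⟨((n : ℤ), 0), by simp⟩

/-- The unique vertex of `D n` at level `−n`. -/
def gadgetBot (n : ℕ) : GadgetVert n :=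
  ⟨(-(n : ℤ), 0), by simp⟩

/-- `GadgetVert n` as a disjoint union of its levels `-n, …, n`. -/
def vertEquiv (n : ℕ) : GadgetVert n ≃
    Σ i : {i : ℤ // i ∈ Finset.Icc (-(n : ℤ)) n}, Fin (2 ^ (n - i.1.natAbs)) where
  toFun v := ⟨⟨v.1.1, by have := v.2.1; rw [Finset.mem_Icc]; omega⟩, ⟨v.1.2, v.2.2⟩⟩
  invFun s := ⟨(s.1.1, s.2.1), by have := Finset.mem_Icc.1 s.1.2; dsimp only; omega, s.2.2⟩
  left_inv _ := rfl
  right_inv _ := rfl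

noncomputable instance (n : ℕ) : Fintype (GadgetVert n) := Fintype.ofEquiv _ (vertEquiv n).symm

/-- The number of vertices at level `i`, as a real number. -/
noncomputable def levelSize (n : ℕ) (i : ℤ) : ℝ := 2 ^ (n - i.natAbs)

lemma levelSize_ne_zero (n : ℕ) (i : ℤ) : levelSize n i ≠ 0 := by
  unfold levelSize; positivity

lemma sum_level (n : ℕ) (f : ℤ → ℝ) :
    ∑ v : GadgetVert n, f v.1.1 = ∑ i ∈ Finset.Icc (-(n : ℤ)) n, levelSize n i * f i := by
  rw [Fintype.sum_equiv (vertEquiv n) (fun v => f v.1.1) (fun s => f s.1.1) (fun _ => rfl),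
    Fintype.sum_sigma, ← Finset.sum_coe_sort (Finset.Icc (-(n : ℤ)) n)]
  simp [levelSize]

/-- The sign of the current from level `i` to level `j`: current runs downwards between
consecutive levels only. -/
noncomputable def dir (i j : ℤ) : ℝ := (if j = i - 1 then 1 else 0) - (if j = i + 1 then 1 else 0)

lemma dir_antisymm (i j : ℤ) : dir i j = -dir j i := by
  unfold dir; split_ifs <;> first | omega | norm_num

/-- The unit flow from top to bottom that is uniform over the edges between consecutive levels. -/
noncomputable def levelFlow (n : ℕ) (u v : GadgetVert n) : ℝ :=
  dir u.1.1 v.1.1 / (levelSize n u.1.1 * levelSize n v.1.1)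

lemma levelFlow_antisymm (n : ℕ) (u v : GadgetVert n) : levelFlow n u v = -levelFlow n v u := by
  unfold levelFlow; rw [dir_antisymm, mul_comm, neg_div]

lemma isFlow_levelFlow (n : ℕ) : IsFlow (gadgetGraph n) (levelFlow n) := by
  refine ⟨levelFlow_antisymm n, fun u v h => ?_⟩
  have hd : dir u.1.1 v.1.1 ≠ 0 := fun h0 => h (by simp [levelFlow, h0])
  rw [gadgetGraph, SimpleGraph.fromRel_adj]
  have hl : v.1.1 = u.1.1 - 1 ∨ v.1.1 = u.1.1 + 1 := by
    by_contra! hc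
    exact hd (by simp [dir, hc.1, hc.2])
  refine ⟨?_, by omega⟩
  rintro rfl
  omega

/-- At an inner level both indicators are `1`; at the top (bottom) level only the first (second)
one is. -/
lemma divg_levelFlow (n : ℕ) (v : GadgetVert n) :
    divg (levelFlow n) v = ((if v.1.1 - 1 ∈ Finset.Icc (-(n : ℤ)) n then 1 else 0)
      - (if v.1.1 + 1 ∈ Finset.Icc (-(n : ℤ)) n then 1 else 0)) / levelSize n v.1.1 := by
  unfold divg levelFlow
  rw [tsum_fintype, sum_level n (fun j => dir v.1.1 j / (levelSize n v.1.1 * levelSize n j))]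
  have h : ∀ j, levelSize n j * (dir v.1.1 j / (levelSize n v.1.1 * levelSize n j))
      = dir v.1.1 j / levelSize n v.1.1 := fun j => by
    have := levelSize_ne_zero n j
    have := levelSize_ne_zero n v.1.1
    field_simp
  simp only [h]
  rw [← Finset.sum_div]
  simp only [dir, Finset.sum_sub_distrib, Finset.sum_ite_eq']

lemma divg_top (n : ℕ) (hn : 1 ≤ n) : divg (levelFlow n) (gadgetTop n) = 1 := by
  rw [divg_levelFlow]
  have h0 : (gadgetTop n).1.1 = n := rfl
  rw [h0, if_pos (by rw [Finset.mem_Icc]; omega), if_neg (by rw [Finset.mem_Icc]; omega)]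
  simp [levelSize]

lemma divg_bot (n : ℕ) (hn : 1 ≤ n) : divg (levelFlow n) (gadgetBot n) = -1 := by
  rw [divg_levelFlow]
  have h0 : (gadgetBot n).1.1 = -n := rfl
  rw [h0, if_neg (by rw [Finset.mem_Icc]; omega), if_pos (by rw [Finset.mem_Icc]; omega)]
  simp [levelSize]

lemma divg_inner (n : ℕ) (v : GadgetVert n) (ht : v ≠ gadgetTop n) (hb : v ≠ gadgetBot n) :
    divg (levelFlow n) v = 0 := by
  have hi : v.1.1.natAbs ≤ n := v.2.1
  have h : v.1.1.natAbs ≠ n := by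
    obtain ⟨⟨i, k⟩, _, hk⟩ := v
    dsimp only at hk ⊢
    intro h
    rw [h, Nat.sub_self, pow_zero, Nat.lt_one_iff] at hk
    subst hk
    rcases Int.natAbs_eq i with h' | h' <;> rw [h] at h' <;> subst h'
    · exact ht rfl
    · exact hb rfl
  rw [divg_levelFlow]
  rw [if_pos (by rw [Finset.mem_Icc]; omega), if_pos (by rw [Finset.mem_Icc]; omega), sub_self,
    zero_div]

/-- The potential inducing `levelFlow`, normalised to vanish at level `0`. -/
noncomputable def potential (n : ℕ) (i : ℤ) : ℝ :=
  (if 0 ≤ i then 1 else -1) * (2 ^ (i.natAbs + 1) - 2) / 2 ^ n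

/-- The potential drop between the consecutive levels `i + 1` and `i`. -/
lemma potential_step (n : ℕ) (i : ℤ) (hi : i.natAbs ≤ n) (hi' : (i + 1).natAbs ≤ n) :
    (2 : ℝ) ^ (n - min (i + 1).natAbs i.natAbs) / (levelSize n (i + 1) * levelSize n i)
      = potential n (i + 1) - potential n i := by
  unfold levelSize potential
  rcases le_or_gt 0 i with h | h
  · obtain ⟨m, rfl⟩ := Int.eq_ofNat_of_zero_le h
    obtain ⟨d, rfl⟩ : ∃ d, n = m + 1 + d := ⟨n - (m + 1), by omega⟩
    have e1 : ((m : ℤ) + 1).natAbs = m + 1 := by omega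
    have e2 : (m : ℤ).natAbs = m := by omega
    rw [e1, e2, if_pos (by omega), if_pos (by omega), show min (m + 1) m = m by omega,
      show m + 1 + d - m = d + 1 by omega, show m + 1 + d - (m + 1) = d by omega]
    field_simp
    ring
  · obtain ⟨m, rfl⟩ : ∃ m : ℕ, i = -((m : ℤ) + 1) := ⟨(-i - 1).toNat, by omega⟩
    obtain ⟨d, rfl⟩ : ∃ d, n = m + 1 + d := ⟨n - (m + 1), by omega⟩
    have e1 : (-((m : ℤ) + 1)).natAbs = m + 1 := by omega
    have e2 : (-((m : ℤ) + 1) + 1).natAbs = m := by omega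
    rw [e1, e2, if_neg (by omega : ¬ 0 ≤ -((m : ℤ) + 1)), show min m (m + 1) = m by omega,
      show m + 1 + d - m = d + 1 by omega, show m + 1 + d - (m + 1) = d by omega]
    -- Level `0` counts as nonnegative in `potential`, but there the potential vanishes anyway.
    rcases Nat.eq_zero_or_pos m with rfl | hm
    · simp
      field_simp
      ring
    · rw [if_neg (by omega)]
      field_simp
      ring

/-- Ohm's law, multiplied by the current so that it also holds trivially off the edges. -/
lemma res_mul_levelFlow (n : ℕ) (u v : GadgetVert n) :
    gadgetRes n u v * levelFlow n u v ^ 2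
      = levelFlow n u v * (potential n u.1.1 - potential n v.1.1) := by
  obtain ⟨⟨i, k⟩, hi, hk⟩ := u
  obtain ⟨⟨j, l⟩, hj, hl⟩ := v
  dsimp only at hi hj
  simp only [gadgetRes, levelFlow]
  by_cases h1 : j = i - 1
  · obtain rfl : i = j + 1 := by omega
    rw [← potential_step n j hj hi]
    have : dir (j + 1) j = 1 := by simp [dir, show j ≠ j + 1 + 1 by omega]
    rw [this]
    ring
  by_cases h2 : j = i + 1
  · subst h2
    rw [← neg_sub (potential n (i + 1)), ← potential_step n i hi hj, min_comm]
    have : dir i (i + 1) = -1 := by simp [dir, show i + 1 ≠ i - 1 by omega]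
    rw [this]
    ring
  · simp [dir, h1, h2]

/-- Summation by parts turns the energy into `∑ v, Φ v * divg v`, to which only the two end
vertices contribute. -/
lemma energy_eq (n : ℕ) (hn : 1 ≤ n) :
    (1 / 2) * ∑' p : GadgetVert n × GadgetVert n, gadgetRes n p.1 p.2 * levelFlow n p.1 p.2 ^ 2
      = potential n n - potential n (-n) := by
  classical
  have hA : ∑ u : GadgetVert n, ∑ v, levelFlow n u v * potential n u.1.1
      = potential n n - potential n (-n) := by
    have hdiv : ∀ u : GadgetVert n, ∑ v, levelFlow n u v * potential n u.1.1
        = divg (levelFlow n) u * potential n u.1.1 := fun u => by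
      rw [divg, tsum_fintype, Finset.sum_mul]
    have hne : gadgetTop n ≠ gadgetBot n := by
      intro h
      have : (n : ℤ) = -n := congrArg (fun v : GadgetVert n => v.1.1) h
      omega
    simp only [hdiv]
    rw [Fintype.sum_eq_add _ _ hne, divg_top n hn, divg_bot n hn]
    · simp only [gadgetTop, gadgetBot]
      ring
    · rintro v ⟨ht, hb⟩
      rw [divg_inner n v ht hb, zero_mul]
  have hB : ∑ u : GadgetVert n, ∑ v, levelFlow n u v * potential n v.1.1
      = -∑ u : GadgetVert n, ∑ v, levelFlow n u v * potential n u.1.1 := by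
    rw [Finset.sum_comm, ← Finset.sum_neg_distrib]
    refine Finset.sum_congr rfl fun v _ => ?_
    rw [← Finset.sum_neg_distrib]
    refine Finset.sum_congr rfl fun u _ => ?_
    rw [levelFlow_antisymm, neg_mul]
  rw [tsum_fintype, Fintype.sum_prod_type]
  simp only [res_mul_levelFlow, mul_sub, Finset.sum_sub_distrib]
  rw [hB, hA]
  ring

lemma potential_drop_le (n : ℕ) (hn : 1 ≤ n) : potential n n - potential n (-n) ≤ 4 := by
  have h : potential n n - potential n (-n) = 4 - 4 / 2 ^ n := by
    unfold potential
    rw [if_pos (by omega), if_neg (by omega), Int.natAbs_neg, Int.natAbs_natCast]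
    field_simp
    ring
  rw [h]
  have : (0 : ℝ) ≤ 4 / 2 ^ n := by positivity
  linarith

theorem gadget_effective_resistance_le_four (n : ℕ) (hn : 1 ≤ n) :
    effRes (gadgetGraph n) (gadgetRes n) (gadgetTop n) (gadgetBot n) ≤ 4 := by
  refine csInf_le_of_le ⟨0, ?_⟩ ⟨levelFlow n, isFlow_levelFlow n, divg_top n hn, divg_bot n hn,
    divg_inner n, Summable.of_finite, (energy_eq n hn).symm⟩ (potential_drop_le n hn)
  rintro E ⟨θ, -, -, -, -, -, rfl⟩
  have : ∀ p : GadgetVert n × GadgetVert n, 0 ≤ gadgetRes n p.1 p.2 * θ p.1 p.2 ^ 2 := fun p => by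
    unfold gadgetRes; positivity
  exact mul_nonneg (by norm_num) (tsum_nonneg this)

end Paper
end

section
/- Let G be a connected locally finite graph and let h be a sharp harmonic function on G. Then for every vertex z, h(z) = P_z( lim_n h(X_n) = 1 ), where (X_n) is the simple random walk started at z. -/
/-!
The process `h (X n)` is a bounded martingale, so `𝔼_z[h (X n)] = h z` for all `n`. Sharpness says
that `h (X n)` converges almost surely to the indicator of the event `{h (X n) → 1}`, and dominated
convergence then turns the constant expectation into the probability of that event.

The expectation identity is derived from the cylinder probabilities alone. `lintegral_cyl_ge` shows
`𝔼_z[f (X n)] ≥ f z` for a nonnegative subharmonic `f`: only the inequality is needed in the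
induction, so nothing has to be said about trajectories that are not paths in `G`. Applying it to
both `h` and `1 - h` gives equality.
-/

/-!
STATEMENT 8: Let G be a connected locally finite graph and let h be a sharp
harmonic function on G.  Then for every vertex z,
h(z) = P_z( lim_n h(X_n) = 1 ), where (X_n) is the simple random walk from z.
-/

namespace Paper

open MeasureTheory Filter
open scoped Classical

variable {V : Type*}

/-- `h` is harmonic: at each vertex, `deg v · h v` equals the sum of `h` over
the neighbours of `v`. -/
def Harmonic (G : SimpleGraph V) (h : V → ℝ) : Prop :=
  ∀ v, ((G.neighborSet v).ncard : ℝ) * h v = ∑ᶠ w ∈ G.neighborSet v, h w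

/-- One-step transition probability of the simple random walk on `G`. -/
noncomputable def stepProb (G : SimpleGraph V) (u w : V) : ENNReal :=
  if G.Adj u w then ((G.neighborSet u).ncard : ENNReal)⁻¹ else 0

/-- `P` is the family of laws of the simple random walk on `G`: `P v` is a
probability measure on the trajectory space `ℕ → V` (with the product
σ-algebra) whose finite-dimensional cylinder probabilities are the products of
the one-step transition probabilities, started at `v`. -/
def IsSRWLaw [MeasurableSpace V] (G : SimpleGraph V)
    (P : V → Measure (ℕ → V)) : Prop :=
  (∀ v, IsProbabilityMeasure (P v)) ∧
  ∀ (v : V) (n : ℕ) (x : ℕ → V),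
    P v {ω | ∀ i ≤ n, ω i = x i} =
      if x 0 = v then ∏ i ∈ Finset.range n, stepProb G (x i) (x (i + 1)) else 0

/-- `h` is a sharp harmonic function: harmonic with values in `[0,1]`, and from
every vertex, almost surely `h (X n)` converges to `0` or to `1`. -/
def Sharp [MeasurableSpace V] (G : SimpleGraph V) (P : V → Measure (ℕ → V))
    (h : V → ℝ) : Prop :=
  Harmonic G h ∧ (∀ v, h v ∈ Set.Icc (0 : ℝ) 1) ∧
  ∀ v, P v {ω | Tendsto (fun n => h (ω n)) atTop (nhds 0) ∨
               Tendsto (fun n => h (ω n)) atTop (nhds 1)} = 1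

/-- The cylinder of trajectories agreeing with `x` up to time `n`. -/
def cyl (n : ℕ) (x : ℕ → V) : Set (ℕ → V) := {ω | ∀ i ≤ n, ω i = x i}

lemma measurableSet_cyl [m : MeasurableSpace V] (hm : m = ⊤) (n : ℕ) (x : ℕ → V) :
    MeasurableSet (cyl n x) := by
  have : cyl n x = ⋂ i, ⋂ (_ : i ≤ n), (fun ω : ℕ → V => ω i) ⁻¹' {x i} := by
    ext ω; simp [cyl]
  rw [this]
  refine MeasurableSet.iInter fun i => MeasurableSet.iInter fun _ => ?_
  refine measurable_pi_apply i ?_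
  rw [hm]; trivial

/-- The Markov property on cylinders. -/
lemma measure_cyl_succ [MeasurableSpace V] {G : SimpleGraph V} {P : V → Measure (ℕ → V)}
    (hP : IsSRWLaw G P) (v : V) (n : ℕ) (x : ℕ → V) :
    P v (cyl (n + 1) x) = P v (cyl n x) * stepProb G (x n) (x (n + 1)) := by
  unfold cyl
  rw [hP.2, hP.2]
  split_ifs
  · rw [Finset.prod_range_succ]
  · simp

/-- An isolated vertex of a connected graph is its only vertex, and then the cylinder probabilities
do not come from a probability measure. -/
lemma neighborSet_nonempty [MeasurableSpace V] {G : SimpleGraph V} (hconn : G.Connected)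
    {P : V → Measure (ℕ → V)} (hP : IsSRWLaw G P) (v : V) : (G.neighborSet v).Nonempty := by
  by_contra hne
  rw [Set.not_nonempty_iff_eq_empty] at hne
  have hadj : ∀ w, ¬ G.Adj v w := fun w hw => by
    have : w ∈ G.neighborSet v := hw
    simp [hne] at this
  have hall : ∀ w, w = v := fun w => by
    obtain ⟨p⟩ := hconn.preconnected v w
    cases p with
    | nil => rfl
    | cons hvw _ => exact absurd hvw (hadj _)
  have h1 := hP.2 v 1 (fun _ => v)
  have h2 : {ω : ℕ → V | ∀ i ≤ 1, ω i = v} = Set.univ :=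
    Set.eq_univ_of_forall fun ω i _ => hall _
  have := hP.1 v
  rw [h2] at h1
  simp [stepProb] at h1

/-- A submartingale inequality: conditionally on the walk following `x` up to time `n`, the
expectation of a subharmonic `f` at time `n + k` is at least `f (x n)`. -/
lemma lintegral_cyl_ge [m : MeasurableSpace V] (hm : m = ⊤) {G : SimpleGraph V}
    (hlf : ∀ v, (G.neighborSet v).Finite) {P : V → Measure (ℕ → V)} (hP : IsSRWLaw G P)
    (f : V → ENNReal)
    (hf : ∀ v, f v ≤ ∑ w ∈ (hlf v).toFinset, stepProb G v w * f w) (v : V) (k : ℕ) :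
    ∀ (n : ℕ) (x : ℕ → V),
      P v (cyl n x) * f (x n) ≤ ∫⁻ ω in cyl n x, f (ω (n + k)) ∂(P v) := by
  induction k with
  | zero =>
    intro n x
    rw [setLIntegral_congr_fun (g := fun _ => f (x n)) (measurableSet_cyl hm n x)
      (fun ω hω => by simp [hω n le_rfl])]
    simp [mul_comm]
  | succ k ih =>
    intro n x
    let y : V → ℕ → V := fun w => Function.update x (n + 1) w
    have hy : ∀ w, ∀ i ≤ n, y w i = x i := fun w i hi =>
      Function.update_of_ne (by omega) _ _
    have hyn : ∀ w, y w (n + 1) = w := fun w => Function.update_self _ _ _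
    have hcyl : ∀ w, cyl n (y w) = cyl n x := fun w => by
      ext ω
      exact forall₂_congr fun i hi => by rw [hy w i hi]
    calc P v (cyl n x) * f (x n)
        ≤ P v (cyl n x) * ∑ w ∈ (hlf (x n)).toFinset, stepProb G (x n) w * f w := by
          gcongr
          exact hf _
      _ = ∑ w ∈ (hlf (x n)).toFinset, P v (cyl (n + 1) (y w)) * f (y w (n + 1)) := by
          rw [Finset.mul_sum]
          refine Finset.sum_congr rfl fun w _ => ?_
          rw [measure_cyl_succ hP, hcyl, hyn, hy w n le_rfl, mul_assoc]
      _ ≤ ∑ w ∈ (hlf (x n)).toFinset,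
            ∫⁻ ω in cyl (n + 1) (y w), f (ω (n + 1 + k)) ∂(P v) :=
          Finset.sum_le_sum fun w _ => ih (n + 1) (y w)
      _ = ∫⁻ ω in ⋃ w ∈ (hlf (x n)).toFinset, cyl (n + 1) (y w),
            f (ω (n + 1 + k)) ∂(P v) := by
          rw [lintegral_biUnion_finset]
          · intro w _ w' _ hne
            refine Set.disjoint_left.2 fun ω hω hω' => hne ?_
            rw [← hyn w, ← hyn w', ← hω (n + 1) le_rfl, ← hω' (n + 1) le_rfl]
          · exact fun w _ => measurableSet_cyl hm _ _
      _ ≤ ∫⁻ ω in cyl n x, f (ω (n + 1 + k)) ∂(P v) := by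
          refine lintegral_mono_set (Set.iUnion₂_subset fun w _ ω hω => ?_)
          rw [← hcyl w]
          exact fun i hi => hω i (by omega)
      _ = ∫⁻ ω in cyl n x, f (ω (n + (k + 1))) ∂(P v) := by
          simp only [show n + 1 + k = n + (k + 1) by omega]

/-- The submartingale half of `𝔼_z[h (X n)] = h z`, for `h` harmonic with values in `[0, 1]`. -/
lemma le_integral_of_harmonic [m : MeasurableSpace V] (hm : m = ⊤) {G : SimpleGraph V}
    (hconn : G.Connected) (hlf : ∀ v, (G.neighborSet v).Finite) {P : V → Measure (ℕ → V)}
    (hP : IsSRWLaw G P) {h : V → ℝ} (hh : Harmonic G h) (h01 : ∀ v, h v ∈ Set.Icc (0 : ℝ) 1)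
    (z : V) (n : ℕ) : h z ≤ ∫ ω, h (ω n) ∂(P z) := by
  have := hP.1 z
  have hmeas : Measurable h := by
    subst hm
    exact measurable_from_top
  have hsub : ∀ v, ENNReal.ofReal (h v) ≤
      ∑ w ∈ (hlf v).toFinset, stepProb G v w * ENNReal.ofReal (h w) := by
    intro v
    have hpos : 0 < (G.neighborSet v).ncard :=
      (Set.ncard_pos (hlf v)).2 (neighborSet_nonempty hconn hP v)
    have hsum := hh v
    rw [finsum_mem_eq_finite_toFinset_sum _ (hlf v)] at hsum
    have heq : ∑ w ∈ (hlf v).toFinset, stepProb G v w * ENNReal.ofReal (h w)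
        = ((G.neighborSet v).ncard : ENNReal)⁻¹ *
          ENNReal.ofReal (∑ w ∈ (hlf v).toFinset, h w) := by
      rw [ENNReal.ofReal_sum_of_nonneg fun w _ => (h01 w).1, Finset.mul_sum]
      refine Finset.sum_congr rfl fun w hw => ?_
      have : G.Adj v w := by simpa using hw
      simp [stepProb, this]
    rw [heq, ← hsum, ENNReal.ofReal_mul (by positivity), ENNReal.ofReal_natCast, ← mul_assoc,
      ENNReal.inv_mul_cancel (by simpa using hpos.ne') (ENNReal.natCast_ne_top _), one_mul]
  have key := lintegral_cyl_ge hm hlf hP (fun v => ENNReal.ofReal (h v)) hsub z n 0 (fun _ => z)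
  have hc : P z (cyl 0 (fun _ => z)) = 1 := by
    unfold cyl
    rw [hP.2]
    simp
  rw [hc, one_mul, zero_add] at key
  have key2 := key.trans (setLIntegral_le_lintegral _ _)
  have hint : Integrable (fun ω : ℕ → V => h (ω n)) (P z) := by
    refine Integrable.of_bound (hmeas.comp (measurable_pi_apply n)).aestronglyMeasurable 1
      (ae_of_all _ fun ω => ?_)
    rw [Real.norm_eq_abs, abs_of_nonneg (h01 _).1]
    exact (h01 _).2
  rw [← ofReal_integral_eq_lintegral_ofReal hint (ae_of_all _ fun ω => (h01 _).1)] at key2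
  exact (ENNReal.ofReal_le_ofReal_iff (integral_nonneg fun ω => (h01 _).1)).1 key2

lemma Harmonic.one_sub {G : SimpleGraph V} (hlf : ∀ v, (G.neighborSet v).Finite) {h : V → ℝ}
    (hh : Harmonic G h) : Harmonic G (fun v => 1 - h v) := by
  intro v
  have hsum := hh v
  rw [finsum_mem_eq_finite_toFinset_sum _ (hlf v)] at hsum ⊢
  rw [Finset.sum_sub_distrib, ← hsum, Set.ncard_eq_toFinset_card _ (hlf v)]
  simp
  ring

theorem sharp_harmonic_eq_prob {V : Type} [m : MeasurableSpace V] (hm : m = ⊤)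
    (G : SimpleGraph V) (hconn : G.Connected)
    (hlf : ∀ v, (G.neighborSet v).Finite)
    (P : V → Measure (ℕ → V)) (hP : IsSRWLaw G P)
    (h : V → ℝ) (hsharp : Sharp G P h) :
    ∀ z : V, h z = (P z {ω | Tendsto (fun n => h (ω n)) atTop (nhds 1)}).toReal := by
  intro z
  obtain ⟨hh, h01, hlim⟩ := hsharp
  have := hP.1 z
  have hmeas : ∀ n, Measurable fun ω : ℕ → V => h (ω n) := fun n => by
    have : Measurable h := by
      subst hm
      exact measurable_from_top
    exact this.comp (measurable_pi_apply n)
  have hbd : ∀ n (ω : ℕ → V), ‖h (ω n)‖ ≤ 1 := fun n ω => by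
    rw [Real.norm_eq_abs, abs_of_nonneg (h01 _).1]
    exact (h01 _).2
  have hexp : ∀ n, ∫ ω, h (ω n) ∂(P z) = h z := fun n => by
    refine le_antisymm ?_ (le_integral_of_harmonic hm hconn hlf hP hh h01 z n)
    have h2 := le_integral_of_harmonic hm hconn hlf hP (hh.one_sub hlf)
      (fun v => ⟨sub_nonneg.2 (h01 v).2, sub_le_self _ (h01 v).1⟩) z n
    rw [integral_sub (integrable_const _)
      (Integrable.of_bound (hmeas n).aestronglyMeasurable 1 (ae_of_all _ (hbd n)))] at h2
    simp at h2
    linarith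
  have hA : ∀ c : ℝ, MeasurableSet {ω : ℕ → V | Tendsto (fun n => h (ω n)) atTop (nhds c)} :=
    fun c => measurableSet_tendsto (nhds c) hmeas
  have hae := (mem_ae_iff_prob_eq_one ((hA 0).union (hA 1))).2 (hlim z)
  have hconv := tendsto_integral_of_dominated_convergence (μ := P z)
    (F := fun n ω => h (ω n))
    (f := Set.indicator {ω : ℕ → V | Tendsto (fun n => h (ω n)) atTop (nhds 1)} 1)
    (fun _ => 1) (fun n => (hmeas n).aestronglyMeasurable) (integrable_const _)
    (fun n => ae_of_all _ (hbd n)) (by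
      filter_upwards [hae] with ω hω
      by_cases h1 : Tendsto (fun n => h (ω n)) atTop (nhds 1)
      · rw [Set.indicator_of_mem (by exact h1)]
        exact h1
      · rw [Set.indicator_of_notMem (by exact h1)]
        exact hω.resolve_right h1)
  rw [integral_indicator_one (hA 1)] at hconv
  simp only [hexp] at hconv
  exact tendsto_nhds_unique tendsto_const_nhds hconv

end Paper
end

section
/- Let G be a connected locally finite graph and let h be a sharp harmonic function on G that is not constant. Then for every ε > 0 there are vertices a, z of G with h(a) < ε and h(z) > 1 − ε. -/
/-!
If `h ≥ ε` everywhere, then `h (X n)` cannot tend to `0`, so sharpness forces `h (X n) → 1`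
almost surely from every vertex.  Harmonicity makes the expectation of `h (X n)` under `P v`
equal to `h v` for every `n` (`lintegral_walk`), so dominated convergence gives `h v = 1` for
every `v`, and `h` is constant.  The case `h ≤ 1 - ε` is the same with limit `0`
(`eq_of_ae_tendsto` covers both).

Expectations are taken as `ℝ≥0∞`-valued integrals of `ENNReal.ofReal ∘ h`.  The vertex set of a
connected locally finite graph is countable (`countable_of_connected`), so the trajectory space
is a countable disjoint union of cylinders of a given length, and the one-step identity is checked
on each cylinder.
-/


/-!
STATEMENT 9: Let G be a connected locally finite graph and let h be a sharp
harmonic function on G that is not constant.  Then for every ε > 0 there are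
vertices a, z of G with h(a) < ε and h(z) > 1 − ε.
-/

namespace Paper

open MeasureTheory Filter
open scoped Classical

variable {V : Type*}

/-- A connected locally finite graph is countable: the sets reached in `n` steps are finite. -/
lemma countable_of_connected {V : Type} (G : SimpleGraph V) (hconn : G.Connected)
    (hlf : ∀ v, (G.neighborSet v).Finite) : Countable V := by
  obtain ⟨v⟩ := hconn.nonempty
  let S : ℕ → Set V := fun n => Nat.rec {v} (fun _ s => ⋃ u ∈ s, G.neighborSet u) n
  have hS : ∀ n, (S n).Finite := by
    intro n
    induction n with
    | zero => exact Set.finite_singleton v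
    | succ n ih => exact ih.biUnion fun u _ => hlf u
  have hcov : ∀ w, w ∈ ⋃ n, S n := by
    intro w
    have hr := (SimpleGraph.reachable_iff_reflTransGen v w).1 (hconn.preconnected v w)
    induction hr with
    | refl => exact Set.mem_iUnion.2 ⟨0, rfl⟩
    | tail _ hadj ih =>
      obtain ⟨n, hn⟩ := Set.mem_iUnion.1 ih
      exact Set.mem_iUnion.2 ⟨n + 1, Set.mem_biUnion hn hadj⟩
  rw [← Set.countable_univ_iff, ← Set.eq_univ_of_forall hcov]
  exact Set.countable_iUnion fun n => (hS n).countable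

/-- Harmonicity in averaged form.  The degree must be positive, since at an isolated vertex
`Harmonic` imposes no condition. -/
lemma tsum_stepProb_mul {V : Type} (G : SimpleGraph V) (hlf : ∀ v, (G.neighborSet v).Finite)
    (h : V → ℝ) (hh : Harmonic G h) (h0 : ∀ v, 0 ≤ h v) (u : V)
    (hne : (G.neighborSet u).Nonempty) :
    ∑' w, stepProb G u w * ENNReal.ofReal (h w) = ENNReal.ofReal (h u) := by
  have hd : (G.neighborSet u).ncard ≠ 0 := (Set.ncard_pos (hlf u)).2 hne |>.ne'
  rw [tsum_eq_sum (s := (hlf u).toFinset)]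
  · have h1 : ∀ w ∈ (hlf u).toFinset, stepProb G u w * ENNReal.ofReal (h w) =
        ((G.neighborSet u).ncard : ENNReal)⁻¹ * ENNReal.ofReal (h w) := by
      intro w hw
      have hadj : G.Adj u w := by simpa using hw
      simp [stepProb, hadj]
    rw [Finset.sum_congr rfl h1, ← Finset.mul_sum,
      ← ENNReal.ofReal_sum_of_nonneg fun w _ => h0 w,
      ← finsum_mem_eq_finite_toFinset_sum h (hlf u), ← hh u,
      ENNReal.ofReal_mul (Nat.cast_nonneg _), ENNReal.ofReal_natCast, ← mul_assoc,
      ENNReal.inv_mul_cancel (by exact_mod_cast hd) (ENNReal.natCast_ne_top _), one_mul]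
  · intro w hw
    have hadj : ¬ G.Adj u w := by simpa using hw
    simp [stepProb, hadj]

lemma measurableSet_cylinder {V : Type} [MeasurableSpace V] [MeasurableSingletonClass V]
    (n : ℕ) (x : ℕ → V) : MeasurableSet {ω : ℕ → V | ∀ i ≤ n, ω i = x i} := by
  simp only [Set.ofPred_forall]
  exact MeasurableSet.iInter fun i => MeasurableSet.iInter fun _ =>
    (measurable_pi_apply (X := fun _ : ℕ => V) i) (measurableSet_singleton (x i))

/-- The Markov property on a cylinder: given the first `n` steps, the expected next value of a
function `f` that is invariant under averaging is its current value. -/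
lemma setLIntegral_cylinder_succ {V : Type} [MeasurableSpace V] [DiscreteMeasurableSpace V]
    [Countable V] (G : SimpleGraph V) (P : V → Measure (ℕ → V)) (hP : IsSRWLaw G P)
    (f : V → ENNReal) (hf : ∀ u, ∑' w, stepProb G u w * f w = f u) (v : V) (n : ℕ)
    (x : ℕ → V) :
    ∫⁻ ω in {ω : ℕ → V | ∀ i ≤ n, ω i = x i}, f (ω (n + 1)) ∂P v =
      ∫⁻ ω in {ω : ℕ → V | ∀ i ≤ n, ω i = x i}, f (ω n) ∂P v := by
  set C := {ω : ℕ → V | ∀ i ≤ n, ω i = x i} with hC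
  have hCm : MeasurableSet C := measurableSet_cylinder n x
  have hnext : ∀ w, P v ((fun ω : ℕ → V => ω (n + 1)) ⁻¹' {w} ∩ C) =
      P v C * stepProb G (x n) w := by
    intro w
    have hset : (fun ω : ℕ → V => ω (n + 1)) ⁻¹' {w} ∩ C =
        {ω | ∀ i ≤ n + 1, ω i = Function.update x (n + 1) w i} := by
      ext ω
      simp only [hC, Set.mem_inter_iff, Set.mem_preimage, Set.mem_singleton_iff, Set.mem_ofPred_eq]
      constructor
      · rintro ⟨hw, hx⟩ i hi
        rcases Nat.lt_or_ge n i with hni | hni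
        · obtain rfl : i = n + 1 := by omega
          simpa using hw
        · rw [Function.update_of_ne (by omega)]
          exact hx i hni
      · intro hx
        refine ⟨by simpa using hx (n + 1) le_rfl, fun i hi => ?_⟩
        have := hx i (by omega)
        rwa [Function.update_of_ne (by omega)] at this
    rw [hset, hP.2, hC, hP.2, Function.update_of_ne (by omega), Finset.prod_range_succ]
    split_ifs
    · congr 1
      · refine Finset.prod_congr rfl fun i hi => ?_
        have hi := Finset.mem_range.1 hi
        rw [Function.update_of_ne (by omega), Function.update_of_ne (by omega)]
      · rw [Function.update_of_ne (by omega), Function.update_self]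
    · simp
  have hL : ∫⁻ ω in C, f (ω (n + 1)) ∂P v = P v C * f (x n) := by
    rw [← lintegral_map (f := f) (g := fun ω : ℕ → V => ω (n + 1)) (Measurable.of_discrete)
      (measurable_pi_apply _), lintegral_countable', ← hf (x n), ← ENNReal.tsum_mul_left]
    refine tsum_congr fun w => ?_
    rw [Measure.map_apply (measurable_pi_apply _) (measurableSet_singleton w),
      Measure.restrict_apply (measurable_pi_apply (n + 1) (measurableSet_singleton w)), hnext w]
    ring
  have hR : ∫⁻ ω in C, f (ω n) ∂P v = P v C * f (x n) := by
    rw [setLIntegral_congr_fun hCm (g := fun _ => f (x n))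
      (fun ω hω => congrArg f (hω n le_rfl)), setLIntegral_const, mul_comm]
  rw [hL, hR]

/-- The expectation of an averaging-invariant function along the walk is constant in time. -/
lemma lintegral_walk {V : Type} [MeasurableSpace V] [DiscreteMeasurableSpace V]
    [Countable V] (G : SimpleGraph V) (P : V → Measure (ℕ → V)) (hP : IsSRWLaw G P)
    (f : V → ENNReal) (hf : ∀ u, ∑' w, stepProb G u w * f w = f u) (v : V) (n : ℕ) :
    ∫⁻ ω, f (ω n) ∂P v = f v := by
  have := hP.1 v
  induction n with
  | zero =>
    have h1 : P v {ω | ∀ i ≤ 0, ω i = v} = 1 := by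
      simpa using hP.2 v 0 (fun _ => v)
    have hae : ∀ᵐ ω ∂P v, ∀ i ≤ 0, ω i = v :=
      (mem_ae_iff_prob_eq_one (measurableSet_cylinder 0 fun _ => v)).2 h1
    rw [lintegral_congr_ae (g := fun _ => f v)
      (hae.mono fun ω hω => congrArg f (hω 0 le_rfl))]
    simp
  | succ n ih =>
    rw [← ih]
    -- Prefixes of length `n + 1`, extended by the constant `v`, index the cylinders.
    let ext : (Fin (n + 1) → V) → ℕ → V := fun y i => if hi : i < n + 1 then y ⟨i, hi⟩ else v
    let C : (Fin (n + 1) → V) → Set (ℕ → V) := fun y => {ω | ∀ i ≤ n, ω i = ext y i}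
    have hC : ∀ y ω, ω ∈ C y ↔ y = fun i : Fin (n + 1) => ω i := by
      intro y ω
      constructor
      · intro hω
        funext i
        have := hω i (by omega)
        simp only [ext, dif_pos i.isLt] at this
        exact this.symm
      · rintro rfl i hi
        simp only [ext, dif_pos (Nat.lt_succ_of_le hi)]
    have hdisj : Pairwise (Function.onFun Disjoint C) := by
      intro y z hyz
      refine Set.disjoint_left.2 fun ω hy hz => hyz ?_
      rw [(hC y ω).1 hy, (hC z ω).1 hz]
    have hcov : ⋃ y, C y = Set.univ :=
      Set.eq_univ_of_forall fun ω => Set.mem_iUnion.2 ⟨_, (hC _ ω).2 rfl⟩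
    have hm : ∀ y, MeasurableSet (C y) := fun y => measurableSet_cylinder n (ext y)
    rw [← setLIntegral_univ, ← setLIntegral_univ (fun ω : ℕ → V => f (ω n)), ← hcov,
      lintegral_iUnion hm hdisj, lintegral_iUnion hm hdisj]
    exact tsum_congr fun y => setLIntegral_cylinder_succ G P hP f hf v n (ext y)

/-- Dominated convergence: a bounded harmonic function equals any constant to which it almost
surely converges along the walk. -/
lemma eq_of_ae_tendsto {V : Type} [MeasurableSpace V] [DiscreteMeasurableSpace V]
    [Countable V] (G : SimpleGraph V) (hlf : ∀ v, (G.neighborSet v).Finite)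
    (hne : ∀ v, (G.neighborSet v).Nonempty)
    (P : V → Measure (ℕ → V)) (hP : IsSRWLaw G P) (h : V → ℝ) (hh : Harmonic G h)
    (h01 : ∀ v, h v ∈ Set.Icc (0 : ℝ) 1) (c : ℝ) (hc : 0 ≤ c) (v : V)
    (hlim : ∀ᵐ ω ∂P v, Tendsto (fun n => h (ω n)) atTop (nhds c)) : h v = c := by
  have := hP.1 v
  have hf := fun u => tsum_stepProb_mul G hlf h hh (fun v => (h01 v).1) u (hne u)
  have ht : Tendsto (fun n => ∫⁻ ω, ENNReal.ofReal (h (ω n)) ∂P v) atTop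
      (nhds (∫⁻ _, ENNReal.ofReal c ∂P v)) := by
    refine tendsto_lintegral_of_dominated_convergence (fun _ => 1) (fun n => ?_)
      (fun n => ae_of_all _ fun ω => ?_) (by simp) ?_
    · exact (Measurable.of_discrete (f := fun u : V => ENNReal.ofReal (h u))).comp
        (measurable_pi_apply n)
    · simpa using (h01 (ω n)).2
    · exact hlim.mono fun ω hω => ENNReal.tendsto_ofReal hω
  simp only [lintegral_walk G P hP (fun u => ENNReal.ofReal (h u)) hf v, lintegral_const,
    measure_univ, mul_one] at ht
  exact (ENNReal.ofReal_eq_ofReal_iff (h01 v).1 hc).1 (tendsto_nhds_unique tendsto_const_nhds ht)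

theorem sharp_harmonic_not_constant_attains_extremes
    {V : Type} [m : MeasurableSpace V] (hm : m = ⊤)
    (G : SimpleGraph V) (hconn : G.Connected)
    (hlf : ∀ v, (G.neighborSet v).Finite)
    (P : V → Measure (ℕ → V)) (hP : IsSRWLaw G P)
    (h : V → ℝ) (hsharp : Sharp G P h)
    (hnc : ¬ ∀ u v : V, h u = h v) :
    ∀ ε : ℝ, 0 < ε → ∃ a z : V, h a < ε ∧ 1 - ε < h z := by
  intro ε hε
  have : DiscreteMeasurableSpace V := ⟨fun s => by subst hm; trivial⟩
  have : Countable V := countable_of_connected G hconn hlf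
  obtain ⟨hh, h01, hlim⟩ := hsharp
  have : Nontrivial V := by
    by_contra hV
    rw [not_nontrivial_iff_subsingleton] at hV
    exact hnc fun u v => congrArg h (Subsingleton.elim u v)
  have hne : ∀ v, (G.neighborSet v).Nonempty := fun v =>
    hconn.preconnected.exists_adj_of_nontrivial v
  have hae : ∀ v, ∀ᵐ ω ∂P v, Tendsto (fun n => h (ω n)) atTop (nhds 0) ∨
      Tendsto (fun n => h (ω n)) atTop (nhds 1) := by
    intro v
    have := hP.1 v
    have hmeas : ∀ n, Measurable fun ω : ℕ → V => h (ω n) := fun n =>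
      (Measurable.of_discrete (f := h)).comp (measurable_pi_apply n)
    exact (mem_ae_iff_prob_eq_one ((measurableSet_tendsto (nhds 0) hmeas).union
      (measurableSet_tendsto (nhds 1) hmeas))).2 (hlim v)
  have ha : ∃ a, h a < ε := by
    by_contra! hge
    have hone : ∀ v, h v = 1 := fun v =>
      eq_of_ae_tendsto G hlf hne P hP h hh h01 1 zero_le_one v ((hae v).mono fun ω hω =>
        hω.resolve_left fun h0 => absurd (ge_of_tendsto' h0 fun n => hge (ω n)) (not_le.2 hε))
    exact hnc fun u v => (hone u).trans (hone v).symm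
  have hz : ∃ z, 1 - ε < h z := by
    by_contra! hle
    have hzero : ∀ v, h v = 0 := fun v =>
      eq_of_ae_tendsto G hlf hne P hP h hh h01 0 le_rfl v ((hae v).mono fun ω hω =>
        hω.resolve_right fun h1 => by
          have := le_of_tendsto' h1 fun n => hle (ω n)
          linarith)
    exact hnc fun u v => (hzero u).trans (hzero v).symm
  obtain ⟨a, ha⟩ := ha
  obtain ⟨z, hz⟩ := hz
  exact ⟨a, z, ha, hz⟩

end Paper
end

section
/- For n ≥ 0, in the graph G_n of dyadic cubes, the graph distance between the two opposite corner cubes [0,2^{−n}]³ and [1−2^{−n},1]³ of D_n is at least n. -/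
/-!
The function `⟨i, a⟩ ↦ ⌊log₂ (a 0 + 1)⌋` changes by at most one along every edge: passing from a
cube to a child, or to a face neighbour with a larger coordinate, replaces `a 0 + 1` by a number
between `a 0 + 1` and `2 (a 0 + 1)` (`log_step`, `cubePot_of_rel`). It equals `0` at the corner
`[0, 2^{-n}]³` and `n` at the corner `[1 - 2^{-n}, 1]³`, so every walk between the two corners has
length at least `n`. Since `SimpleGraph.dist` is `0` for vertices in different components, the
proof also needs the corners to be connected; every cube is connected to the unit cube through its
ancestors (`reachable_cubeRoot`).
-/

/-!
STATEMENT 14: For n ≥ 0, in the graph G_n of dyadic cubes of the unit cube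
[0,1]³ (levels 0,…,n; a level-i cube is adjacent to the eight level-(i+1) cubes
it contains and to the same-level cubes it shares a face with), the graph
distance between the two opposite corner cubes [0,2^{−n}]³ and [1−2^{−n},1]³
of level n is at least n.

Encoding: the level-i dyadic cube ∏_t [a t/2^i, (a t + 1)/2^i] (for
a : Fin 3 → Fin (2^i)) is encoded as ⟨i, a⟩; containment of a level-(i+1) cube b
in a level-i cube a amounts to (b t)/2 = a t for all t, and sharing a face
amounts to differing by exactly 1 in exactly one coordinate.
-/

namespace Paper

/-- The vertices of `G n`: dyadic cubes of levels `0, …, n`. -/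
def CubeVert (n : ℕ) : Type := Σ i : Fin (n + 1), Fin 3 → Fin (2 ^ (i : ℕ))

/-- Adjacency of dyadic cubes: one contains the other and their levels differ
by one, or they have the same level and share a face (their intersection is a
square). -/
def cubeRel (n : ℕ) (x y : CubeVert n) : Prop :=
  ((y.1 : ℕ) = (x.1 : ℕ) + 1 ∧ ∀ t, (y.2 t : ℕ) / 2 = (x.2 t : ℕ)) ∨
  ((x.1 : ℕ) = (y.1 : ℕ) ∧
    ∃ t, ((x.2 t : ℕ) + 1 = (y.2 t : ℕ) ∨ (y.2 t : ℕ) + 1 = (x.2 t : ℕ)) ∧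
      ∀ s, s ≠ t → (x.2 s : ℕ) = (y.2 s : ℕ))

/-- The graph `G n` of dyadic cubes. -/
def cubeGraph (n : ℕ) : SimpleGraph (CubeVert n) := SimpleGraph.fromRel (cubeRel n)

/-- The corner cube `[0, 2^{−n}]³` of level `n`. -/
def cornerZero (n : ℕ) : CubeVert n :=
  ⟨Fin.last n, fun _ => ⟨0, by positivity⟩⟩

/-- The corner cube `[1 − 2^{−n}, 1]³` of level `n`. -/
def cornerOne (n : ℕ) : CubeVert n :=
  ⟨Fin.last n, fun _ => ⟨2 ^ n - 1, by
    have : (0:ℕ) < 2 ^ n := by positivity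
    simp only [Fin.val_last]
    omega⟩⟩

/-- The function `⟨i, a⟩ ↦ ⌊log₂ (a 0 + 1)⌋`, used as a 1-Lipschitz potential on the graph. -/
def cubePot {n : ℕ} (x : CubeVert n) : ℕ := Nat.log 2 ((x.2 0 : ℕ) + 1)

/-- If `a ≤ b ≤ 2 a + 1`, i.e. `a + 1 ≤ b + 1 ≤ 2 (a + 1)`, the potential grows by at most one.
Both a step to a child and a unit step upwards in a coordinate are of this form. -/
lemma log_step {a b : ℕ} (h1 : a ≤ b) (h2 : b ≤ 2 * a + 1) :
    Nat.log 2 (a + 1) ≤ Nat.log 2 (b + 1) ∧ Nat.log 2 (b + 1) ≤ Nat.log 2 (a + 1) + 1 := by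
  refine ⟨Nat.log_mono_right (by omega), ?_⟩
  rw [← Nat.log_mul_base (by norm_num) (by omega)]
  exact Nat.log_mono_right (by omega)

lemma cubePot_of_rel {n : ℕ} {x y : CubeVert n} (h : cubeRel n x y) :
    cubePot y ≤ cubePot x + 1 ∧ cubePot x ≤ cubePot y + 1 := by
  unfold cubePot
  rcases h with ⟨-, h⟩ | ⟨-, t, ht, hs⟩
  · have h0 := h 0
    have := log_step (a := (x.2 0 : ℕ)) (b := (y.2 0 : ℕ)) (by omega) (by omega)
    omega
  · by_cases h0 : (0 : Fin 3) = t
    · subst h0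
      rcases ht with ht | ht
      · have := log_step (a := (x.2 0 : ℕ)) (b := (y.2 0 : ℕ)) (by omega) (by omega)
        omega
      · have := log_step (a := (y.2 0 : ℕ)) (b := (x.2 0 : ℕ)) (by omega) (by omega)
        omega
    · rw [hs 0 h0]
      omega

lemma cubePot_of_adj {n : ℕ} {x y : CubeVert n} (h : (cubeGraph n).Adj x y) :
    cubePot y ≤ cubePot x + 1 := by
  rcases ((SimpleGraph.fromRel_adj _ _ _).1 h).2 with h | h
  · exact (cubePot_of_rel h).1
  · exact (cubePot_of_rel h).2

lemma cubePot_of_walk {n : ℕ} {x y : CubeVert n} (w : (cubeGraph n).Walk x y) :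
    cubePot y ≤ cubePot x + w.length := by
  induction w with
  | nil => simp
  | cons h _ ih =>
    have := cubePot_of_adj h
    rw [SimpleGraph.Walk.length_cons]
    omega

/-- The whole unit cube, the only vertex of level `0`. -/
def cubeRoot (n : ℕ) : CubeVert n := ⟨0, fun _ => ⟨0, by positivity⟩⟩

/-- Every cube is joined to the unit cube through its chain of ancestors. -/
lemma reachable_cubeRoot (n : ℕ) : ∀ (i : ℕ) (hi : i < n + 1) (a : Fin 3 → Fin (2 ^ i)),
    (cubeGraph n).Reachable (cubeRoot n) (⟨⟨i, hi⟩, a⟩ : CubeVert n) := by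
  intro i
  induction i with
  | zero =>
    intro hi a
    have ha : a = fun _ => ⟨0, by positivity⟩ := by
      funext t
      have h := (a t).isLt
      apply Fin.ext
      simp only [pow_zero] at h
      change (a t : ℕ) = 0
      omega
    subst ha
    exact SimpleGraph.Reachable.refl _
  | succ i ih =>
    intro hi a
    have hlt : ∀ t, (a t : ℕ) / 2 < 2 ^ i := fun t => by
      have h := (a t).isLt
      have hp : 2 ^ (i + 1) = 2 ^ i * 2 := pow_succ 2 i
      omega
    refine (ih (by omega) (fun t => ⟨(a t : ℕ) / 2, hlt t⟩)).trans
      (SimpleGraph.Adj.reachable ?_)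
    refine (SimpleGraph.fromRel_adj _ _ _).2 ⟨fun h => ?_, Or.inl (Or.inl ⟨rfl, fun _ => rfl⟩)⟩
    have h' := congrArg (fun x : CubeVert n => (x.1 : ℕ)) h
    change i = i + 1 at h'
    omega

theorem dyadic_cube_graph_corner_distance (n : ℕ) :
    n ≤ (cubeGraph n).dist (cornerZero n) (cornerOne n) := by
  have hr : (cubeGraph n).Reachable (cornerZero n) (cornerOne n) :=
    (reachable_cubeRoot n n (by omega) _).symm.trans (reachable_cubeRoot n n (by omega) _)
  obtain ⟨w, hw⟩ := hr.exists_walk_length_eq_dist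
  have h := cubePot_of_walk w
  have h0 : cubePot (cornerZero n) = 0 := by simp [cubePot, cornerZero]
  have h1 : cubePot (cornerOne n) = n := by
    have hp : 2 ^ n - 1 + 1 = 2 ^ n := Nat.sub_add_cancel Nat.one_le_two_pow
    simp [cubePot, cornerOne, hp]
  omega

end Paper
end

section
/- Let G be an infinite connected locally finite graph with at least two vertices, and let G⁺ be the graph obtained from G by attaching to each vertex v of G a new disjoint one-way infinite path R_v, joined to v by an edge. Then: (1) every vertex of G⁺ lies on a bi-infinite geodesic of G⁺; and (2) if G is transient then G⁺ is transient. -/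
/-!
Through a vertex `v` of `G`, together with its ray, passes the bi-infinite path that descends the
ray of a neighbour `w`, crosses the edge `wv` and climbs the ray of `v` (`doubleRay`). It is
geodesic because it has a left inverse `height : G⁺ → ℤ` changing by at most one along each edge of
`G⁺`: the height is the signed position on the two rays, and every vertex of `G` other than `w`
gets height `0`. Any path in a graph admitting such a left inverse is geodesic
(`dist_eq_of_height`).

For transience, a finite-energy unit flow on `G` extended by zero to the rays is a finite-energy
unit flow on `G⁺` (`extendFlow`).
-/

/-!
STATEMENT 17: Let G be an infinite connected locally finite graph with at least
two vertices, and let G⁺ be obtained from G by attaching to each vertex v a new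
disjoint one-way infinite path R_v, joined to v by an edge.  Then: (1) every
vertex of G⁺ lies on a bi-infinite geodesic of G⁺; and (2) if G is transient
then G⁺ is transient.

Encoding: the vertices of G⁺ are `V ⊕ V × ℕ`, where `inr (v, n)` is the n-th
vertex of the ray R_v attached at v.
-/

namespace Paper

variable {V : Type*}

/-- Transience via Lyons' criterion: there is a unit flow from some vertex to
infinity of finite energy. -/
def Transient (G : SimpleGraph V) : Prop :=
  ∃ (o : V) (θ : V → V → ℝ), IsFlow G θ ∧ divg θ o = 1 ∧
    (∀ v, v ≠ o → divg θ v = 0) ∧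
    Summable (fun p : V × V => θ p.1 p.2 ^ 2)

/-- The relation generating `G⁺`: edges of `G`, an edge from each `v` to the
first vertex of its ray `R_v`, and the edges of each ray `R_v`. -/
def plusRel (G : SimpleGraph V) : V ⊕ V × ℕ → V ⊕ V × ℕ → Prop
  | Sum.inl u, Sum.inl v => G.Adj u v
  | Sum.inl u, Sum.inr p => p.1 = u ∧ p.2 = 0
  | Sum.inr p, Sum.inr q => q.1 = p.1 ∧ q.2 = p.2 + 1
  | _, _ => False

/-- `G⁺`: the graph `G` with a disjoint one-way infinite path attached to each
vertex. -/
def plusGraph (G : SimpleGraph V) : SimpleGraph (V ⊕ V × ℕ) :=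
  SimpleGraph.fromRel (plusRel G)

lemma exists_walk_along {W : Type*} {H : SimpleGraph W} {g : ℤ → W}
    (hg : ∀ i, H.Adj (g i) (g (i + 1))) (i : ℤ) (n : ℕ) :
    ∃ p : H.Walk (g i) (g (i + n)), p.length = n := by
  induction n with
  | zero => exact ⟨SimpleGraph.Walk.nil.copy rfl (by simp), by simp⟩
  | succ n ih =>
    obtain ⟨p, hp⟩ := ih
    refine ⟨(p.concat (hg (i + n))).copy rfl (by push_cast; rw [add_assoc]), ?_⟩
    simp [hp]

lemma abs_height_sub_le_length {W : Type*} {H : SimpleGraph W} {f : W → ℤ}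
    (hf : ∀ x y, H.Adj x y → |f x - f y| ≤ 1) {x y : W} (p : H.Walk x y) :
    |f x - f y| ≤ p.length := by
  induction p with
  | nil => simp
  | cons h p ih =>
    have := hf _ _ h
    rw [SimpleGraph.Walk.length_cons]
    push_cast
    rw [abs_le] at *
    constructor <;> linarith [this.1, this.2, ih.1, ih.2]

/-- A bi-infinite path with a 1-Lipschitz left inverse `f` is geodesic. -/
lemma dist_eq_of_height {W : Type*} {H : SimpleGraph W} {g : ℤ → W} {f : W → ℤ}
    (hg : ∀ i, H.Adj (g i) (g (i + 1))) (hf : ∀ x y, H.Adj x y → |f x - f y| ≤ 1)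
    (hfg : ∀ i, f (g i) = i) (i j : ℤ) : H.dist (g i) (g j) = (i - j).natAbs := by
  wlog hij : i ≤ j generalizing i j
  · rw [SimpleGraph.dist_comm, this j i (by omega)]
    omega
  obtain ⟨n, rfl⟩ := Int.le.dest hij
  obtain ⟨p, hp⟩ := exists_walk_along hg i n
  have h1 := SimpleGraph.dist_le p
  obtain ⟨q, hq⟩ := p.reachable.exists_walk_length_eq_dist
  have h2 := abs_height_sub_le_length hf q
  rw [hfg, hfg, hq, abs_le] at h2
  omega

/-- The bi-infinite path `…, R_w(1), R_w(0), w, v, R_v(0), R_v(1), …`, with `v` at time `0`. -/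
def doubleRay (v w : V) : ℤ → V ⊕ V × ℕ
  | Int.ofNat 0 => Sum.inl v
  | Int.ofNat (n + 1) => Sum.inr (v, n)
  | Int.negSucc 0 => Sum.inl w
  | Int.negSucc (n + 1) => Sum.inr (w, n)

open Classical in
/-- A 1-Lipschitz function on `G⁺` which restricts to the time parameter on `doubleRay v w`,
for every `v ≠ w`. -/
noncomputable def height (w : V) : V ⊕ V × ℕ → ℤ
  | Sum.inl u => if u = w then -1 else 0
  | Sum.inr (u, n) => if u = w then -(n + 2 : ℤ) else n + 1

lemma doubleRay_adj {G : SimpleGraph V} {v w : V} (h : G.Adj v w) (i : ℤ) :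
    (plusGraph G).Adj (doubleRay v w i) (doubleRay v w (i + 1)) := by
  rw [plusGraph, SimpleGraph.fromRel_adj]
  match i with
  | Int.ofNat 0 => exact ⟨Sum.inl_ne_inr, Or.inl ⟨rfl, rfl⟩⟩
  | Int.ofNat (n + 1) =>
    change (Sum.inr (v, n) : V ⊕ V × ℕ) ≠ Sum.inr (v, n + 1) ∧ _
    exact ⟨by simp, Or.inl ⟨rfl, rfl⟩⟩
  | Int.negSucc 0 => exact ⟨fun e => h.ne' (Sum.inl_injective e), Or.inl h.symm⟩
  | Int.negSucc 1 => exact ⟨Sum.inr_ne_inl, Or.inr ⟨rfl, rfl⟩⟩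
  | Int.negSucc (n + 2) =>
    change (Sum.inr (w, n + 1) : V ⊕ V × ℕ) ≠ Sum.inr (w, n) ∧ _
    exact ⟨by simp, Or.inr ⟨rfl, rfl⟩⟩

lemma height_doubleRay {v w : V} (h : v ≠ w) (i : ℤ) : height w (doubleRay v w i) = i := by
  match i with
  | Int.ofNat 0 => simp [doubleRay, height, h]
  | Int.ofNat (n + 1) => simp [doubleRay, height, h]
  | Int.negSucc 0 => simp [doubleRay, height]
  | Int.negSucc (n + 1) =>
    simp only [doubleRay, height, if_true]
    omega

lemma abs_height_sub_le_of_plusRel {G : SimpleGraph V} (w : V) (x y : V ⊕ V × ℕ)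
    (h : plusRel G x y) : |height w x - height w y| ≤ 1 := by
  match x, y, h with
  | Sum.inl a, Sum.inl b, _ =>
    simp only [height]
    split_ifs <;> simp
  | Sum.inl a, Sum.inr (b, n), h =>
    obtain ⟨rfl, rfl⟩ : b = a ∧ n = 0 := h
    simp only [height]
    split_ifs <;> simp
  | Sum.inr (a, m), Sum.inr (b, n), h =>
    obtain ⟨rfl, rfl⟩ : b = a ∧ n = m + 1 := h
    simp only [height]
    split_ifs <;> (rw [abs_le]; push_cast; constructor <;> linarith)

lemma abs_height_sub_le {G : SimpleGraph V} (w : V) (x y : V ⊕ V × ℕ)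
    (h : (plusGraph G).Adj x y) : |height w x - height w y| ≤ 1 := by
  rw [plusGraph, SimpleGraph.fromRel_adj] at h
  obtain h | h := h.2
  · exact abs_height_sub_le_of_plusRel w x y h
  · rw [abs_sub_comm]
    exact abs_height_sub_le_of_plusRel w y x h

/-- Extension of a flow on `G` to `G⁺`, with no flow along the attached rays. -/
def extendFlow (θ : V → V → ℝ) : V ⊕ V × ℕ → V ⊕ V × ℕ → ℝ
  | Sum.inl u, Sum.inl v => θ u v
  | _, _ => 0

lemma isFlow_extendFlow {G : SimpleGraph V} {θ : V → V → ℝ} (h : IsFlow G θ) :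
    IsFlow (plusGraph G) (extendFlow θ) := by
  constructor
  · rintro (u | u) (v | v) <;> simp only [extendFlow, neg_zero]
    exact h.1 u v
  · rintro (u | u) (v | v) huv <;> simp only [extendFlow, ne_eq, not_true_eq_false] at huv
    have huv := h.2 u v huv
    rw [plusGraph, SimpleGraph.fromRel_adj]
    exact ⟨by simpa using huv.ne, Or.inl huv⟩

lemma divg_extendFlow_inl (θ : V → V → ℝ) (v : V) :
    divg (extendFlow θ) (Sum.inl v) = divg θ v := by
  refine ((Sum.inl_injective (α := V) (β := V × ℕ)).tsum_eq ?_).symm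
  rintro (u | u) hu
  · exact ⟨u, rfl⟩
  · exact absurd rfl hu

lemma divg_extendFlow_inr (θ : V → V → ℝ) (p : V × ℕ) :
    divg (extendFlow θ) (Sum.inr p) = 0 := by
  simp [divg, extendFlow]

lemma summable_extendFlow {θ : V → V → ℝ} (h : Summable fun p : V × V => θ p.1 p.2 ^ 2) :
    Summable fun p : (V ⊕ V × ℕ) × (V ⊕ V × ℕ) => extendFlow θ p.1 p.2 ^ 2 := by
  have hinj := (Sum.inl_injective (α := V) (β := V × ℕ)).prodMap
    (Sum.inl_injective (α := V) (β := V × ℕ))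
  refine (hinj.summable_iff ?_).1 h
  rintro ⟨u | u, v | v⟩ huv
  · exact absurd ⟨(u, v), rfl⟩ huv
  all_goals simp [extendFlow]

lemma transient_plusGraph {G : SimpleGraph V} (h : Transient G) : Transient (plusGraph G) := by
  obtain ⟨o, θ, hθ, ho, hv, hs⟩ := h
  refine ⟨Sum.inl o, extendFlow θ, isFlow_extendFlow hθ, ?_, ?_, summable_extendFlow hs⟩
  · rw [divg_extendFlow_inl, ho]
  · rintro (v | p) hne
    · rw [divg_extendFlow_inl]
      exact hv v fun h => hne (congrArg _ h)
    · exact divg_extendFlow_inr θ p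

theorem plusGraph_biinfinite_geodesics_and_transient
    (V : Type) (G : SimpleGraph V) (hconn : G.Connected) (hinf : Infinite V)
    (hlf : ∀ v, (G.neighborSet v).Finite) (hnt : Nontrivial V) :
    -- (1) every vertex of G⁺ lies on a bi-infinite geodesic of G⁺
    (∀ x : V ⊕ V × ℕ, ∃ g : ℤ → V ⊕ V × ℕ,
      (∀ i j : ℤ, (plusGraph G).dist (g i) (g j) = (i - j).natAbs) ∧
      ∃ i : ℤ, g i = x) ∧
    -- (2) if G is transient then G⁺ is transient
    (Transient G → Transient (plusGraph G)) := by
  refine ⟨?_, transient_plusGraph⟩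
  have key : ∀ v : V, ∃ g : ℤ → V ⊕ V × ℕ,
      (∀ i j : ℤ, (plusGraph G).dist (g i) (g j) = (i - j).natAbs) ∧
      g 0 = Sum.inl v ∧ ∀ n : ℕ, g (Int.ofNat (n + 1)) = Sum.inr (v, n) := by
    intro v
    obtain ⟨w, hw⟩ := hconn.preconnected.exists_adj_of_nontrivial v
    exact ⟨doubleRay v w, dist_eq_of_height (doubleRay_adj hw) (abs_height_sub_le w)
      (height_doubleRay hw.ne), rfl, fun _ => rfl⟩
  rintro (v | ⟨v, n⟩) <;> obtain ⟨g, hg, h0, hn⟩ := key v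
  · exact ⟨g, hg, 0, h0⟩
  · exact ⟨g, hg, _, hn n⟩

end Paper
end
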